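/- (Theorem 2.2, sufficiency part) Let γ > 1 and let the initial data (τ₀,u₀) satisfy Assumption A. If s_x(x,0) ≥ 0 and r_x(x,0) ≥ 0 for all x ∈ ℝ (i.e., the initial data are nowhere compressive), then the Cauchy problem for the p-system admits a unique global-in-time C¹ solution on ℝ × [0,∞). -/

import Mathlib

open Real Set MeasureTheory Filter

/-- `η(τ) = (2√(K₁γ)/(γ−1)) τ^{−(γ−1)/2}`. -/
noncomputable def etaP (K₁ γ τv : ℝ) : ℝ :=
  2 * Real.sqrt (K₁ * γ) / (γ - 1) * τv ^ (-(γ - 1) / 2)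

/-- Lagrangian sound speed `c(τ) = √(K₁γ) τ^{−(γ+1)/2}`. -/
noncomputable def soundP (K₁ γ τv : ℝ) : ℝ :=
  Real.sqrt (K₁ * γ) * τv ^ (-(γ + 1) / 2)

/-- `K_τ = (2√(K₁γ)/(γ−1))^{2/(γ−1)}`. -/
noncomputable def KtauP (K₁ γ : ℝ) : ℝ :=
  (2 * Real.sqrt (K₁ * γ) / (γ - 1)) ^ (2 / (γ - 1))

/-- `K_c = √(K₁γ) K_τ^{−(γ+1)/2}`. -/
noncomputable def KcP (K₁ γ : ℝ) : ℝ :=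
  Real.sqrt (K₁ * γ) * KtauP K₁ γ ^ (-(γ + 1) / 2)

/-- A `Cᵏ` solution `(τ, u)` of the p-system with `γ`-law pressure `p = K₁ τ^{−γ}`
on `ℝ × I`:  `τ > 0`, both components are `Cᵏ`, and the equations
`τ_t − u_x = 0`, `u_t + (p(τ))_x = 0` hold pointwise. -/
def PSysSol (K₁ γ : ℝ) (I : Set ℝ) (k : ℕ) (τ u : ℝ → ℝ → ℝ) : Prop :=
  (∀ x t, t ∈ I → 0 < τ x t) ∧
  ContDiffOn ℝ k (fun p : ℝ × ℝ => τ p.1 p.2) (Set.univ ×ˢ I) ∧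
  ContDiffOn ℝ k (fun p : ℝ × ℝ => u p.1 p.2) (Set.univ ×ˢ I) ∧
  (∀ x : ℝ, ∀ t ∈ I, deriv (fun t' => τ x t') t - deriv (fun x' => u x' t) x = 0) ∧
  (∀ x : ℝ, ∀ t ∈ I, deriv (fun t' => u x t') t + deriv (fun x' => K₁ * τ x' t ^ (-γ)) x = 0)

/-- Assumption A: `τ₀, u₀` are `C¹` with `‖τ₀‖_{C¹} + ‖u₀‖_{C¹} ≤ M₁` and `τ₀ ≥ M₂ > 0`. -/
def AssumptionA (M₁ M₂ : ℝ) (τ₀ u₀ : ℝ → ℝ) : Prop :=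
  ContDiff ℝ 1 τ₀ ∧ ContDiff ℝ 1 u₀ ∧ 0 < M₁ ∧ 0 < M₂ ∧
  (∀ x, |τ₀ x| + |deriv τ₀ x| + |u₀ x| + |deriv u₀ x| ≤ M₁) ∧
  (∀ x, M₂ ≤ τ₀ x)

/-!
The Riemann invariants `s` and `r` are constant along the characteristics of speed `c` and `-c`,
where `c` is a function of `η = (s - r) / 2`. So if `(a, b)` are the feet on `{t = 0}` of the two
characteristics through `(x, t)`, then `s = s₀(a)`, `r = r₀(b)`, and `c` is known as a function of
`(a, b)`. In these coordinates `x` and `t` satisfy linear equations, and the spreading factors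
`V = 2 ∂x/∂a` and `W = 2 ∂x/∂b` solve a linear Goursat problem whose coefficients are nonnegative
exactly because the data are nowhere compressive. Hence `V` and `W` stay away from zero,
characteristics do not focus, and Hadamard's theorem inverts `(a, b) ↦ (x, t)` globally.

This requires bounds on `c`, so the speed is modified for small `η`. A posteriori
`τ_t = u_x` is bounded, so `τ` grows at most linearly and the modification is not felt up to a given
time. Uniqueness is a maximum principle for the difference of two solutions on a triangle of
dependence. It only needs one of the solutions to have bounded sound speed, and it also glues the
solutions on finite time strips.
-/

open scoped Topology

section MaximumPrinciple

variable {E ι : Type*} [NormedAddCommGroup E] [NormedSpace ℝ E]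

lemma eventually_map_add_smul_lt (ℓ : E →L[ℝ] ℝ) {K : Set E} (hK : Convex ℝ K) {p q : E}
    (hp : p ∈ K) (hq : q ∈ K) (hqp : ℓ q < ℓ p) :
    ∀ᶠ t : ℝ in 𝓝[>] 0, p + t • (q - p) ∈ K ∧ ℓ (p + t • (q - p)) < ℓ p := by
  filter_upwards [Ioo_mem_nhdsGT (zero_lt_one' ℝ)] with t ht
  refine ⟨hK.add_smul_sub_mem hp hq ⟨ht.1.le, ht.2.le⟩, ?_⟩
  have hneg : t * (ℓ q - ℓ p) < 0 := mul_neg_of_pos_of_neg ht.1 (sub_neg.2 hqp)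
  simpa only [map_add, map_smul, map_sub, smul_eq_mul, add_lt_iff_neg_left] using hneg

lemma eventually_lt_of_hasLineDerivAt_pos {f : E → ℝ} {p v : E} {f' : ℝ}
    (hf : HasLineDerivAt ℝ f f' p v) (hf' : 0 < f') :
    ∀ᶠ t : ℝ in 𝓝[>] 0, f p < f (p + t • v) := by
  have hslope := (hasDerivWithinAt_iff_tendsto_slope' self_notMem_Ioi).1
    (HasDerivAt.hasDerivWithinAt (s := Ioi 0) hf)
  filter_upwards [hslope.eventually_const_lt hf', self_mem_nhdsWithin] with t ht ht0
  simpa using (slope_pos_iff_of_le (le_of_lt ht0)).1 ht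

/-- A strict maximum principle: at an `ℓ`-minimal point where some `f i` is nonnegative, every `f j`
is a limit of negative values, so a strictly positive derivative of `f i` backwards in `ℓ` is
impossible. -/
theorem forall_neg_of_hasLineDerivAt_pos [Finite ι] {K : Set E} (hKc : IsCompact K)
    (hK : Convex ℝ K) (ℓ : E →L[ℝ] ℝ) {f : ι → E → ℝ} (hf : ∀ i, ContinuousOn (f i) K)
    (hinit : ∀ p ∈ K, (∀ q ∈ K, ℓ p ≤ ℓ q) → ∀ i, f i p < 0)
    (hderiv : ∀ p ∈ K, (∀ j, f j p ≤ 0) → ∀ i, f i p = 0 →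
      ∃ q ∈ K, ℓ q < ℓ p ∧ ∃ f', HasLineDerivAt ℝ (f i) f' p (q - p) ∧ 0 < f') :
    ∀ i, ∀ p ∈ K, f i p < 0 := by
  by_contra! hbad
  let bad : Set E := ⋃ i, K ∩ f i ⁻¹' Ici 0
  have hbadc : IsCompact bad := isCompact_iUnion fun i =>
    hKc.of_isClosed_subset ((hf i).preimage_isClosed_of_isClosed hKc.isClosed isClosed_Ici)
      inter_subset_left
  obtain ⟨p, hpbad, hpmin⟩ := hbadc.exists_isMinOn
    (let ⟨i, p, hp, hfp⟩ := hbad; ⟨p, mem_iUnion.2 ⟨i, hp, hfp⟩⟩) ℓ.continuous.continuousOn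
  obtain ⟨i, hpK, hfi⟩ := mem_iUnion.1 hpbad
  have hgood : ∀ q ∈ K, ℓ q < ℓ p → ∀ j, f j q < 0 := fun q hq hqp j => by
    by_contra! hjq
    exact (hpmin (mem_iUnion.2 ⟨j, hq, hjq⟩)).not_gt hqp
  have hgood_ray : ∀ q ∈ K, ℓ q < ℓ p → ∀ᶠ t : ℝ in 𝓝[>] 0,
      p + t • (q - p) ∈ K ∧ ∀ j, f j (p + t • (q - p)) < 0 := fun q hq hqp =>
    (eventually_map_add_smul_lt ℓ hK hpK hq hqp).mono fun t ht => ⟨ht.1, hgood _ ht.1 ht.2⟩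
  obtain ⟨q, hq, hqp⟩ : ∃ q ∈ K, ℓ q < ℓ p := by
    by_contra! hpℓ
    exact (hinit p hpK hpℓ i).not_ge hfi
  have hpath : Tendsto (fun t : ℝ => p + t • (q - p)) (𝓝[>] 0) (𝓝[K] p) := by
    refine tendsto_nhdsWithin_iff.2 ⟨?_, (hgood_ray q hq hqp).mono fun t ht => ht.1⟩
    exact (Continuous.tendsto' (by fun_prop) 0 p (by simp)).mono_left nhdsWithin_le_nhds
  have hle : ∀ j, f j p ≤ 0 := fun j =>
    le_of_tendsto ((hf j p hpK).tendsto.comp hpath)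
      ((hgood_ray q hq hqp).mono fun t ht => (ht.2 j).le)
  have hzero : f i p = 0 := le_antisymm (hle i) hfi
  obtain ⟨q', hq', hq'p, f', hf', hpos⟩ := hderiv p hpK hle i hzero
  obtain ⟨t, hneg, hlt⟩ :=
    ((hgood_ray q' hq' hq'p).and (eventually_lt_of_hasLineDerivAt_pos hf' hpos)).exists
  exact (hneg.2 i).not_ge (hzero ▸ hlt.le)

end MaximumPrinciple

section PlaneCalculus

/-- The linear form `(x, y) ↦ a x + b y`, that is, `a dx + b dy`. -/
noncomputable def linForm (a b : ℝ) : ℝ × ℝ →L[ℝ] ℝ :=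
  (ContinuousLinearMap.toSpanSingleton ℝ a).coprod (ContinuousLinearMap.toSpanSingleton ℝ b)

@[simp] lemma linForm_apply (a b : ℝ) (z : ℝ × ℝ) : linForm a b z = a * z.1 + b * z.2 := by
  simp [linForm, mul_comm]

lemma clm_prod_ext {ℓ ℓ' : ℝ × ℝ →L[ℝ] ℝ} (h₁ : ℓ (1, 0) = ℓ' (1, 0))
    (h₂ : ℓ (0, 1) = ℓ' (0, 1)) : ℓ = ℓ' := by
  ext <;> simpa

lemma eq_linForm (ℓ : ℝ × ℝ →L[ℝ] ℝ) : ℓ = linForm (ℓ (1, 0)) (ℓ (0, 1)) :=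
  clm_prod_ext (by simp) (by simp)

lemma linForm_sub (a b a' b' : ℝ) :
    linForm a b - linForm a' b' = linForm (a - a') (b - b') :=
  clm_prod_ext (by simp) (by simp)

@[fun_prop]
lemma continuous_linForm {X : Type*} [TopologicalSpace X] {a b : X → ℝ} (ha : Continuous a)
    (hb : Continuous b) : Continuous fun x => linForm (a x) (b x) := by
  have hcoord : (fun x => linForm (a x) (b x)) = fun x =>
      a x • ContinuousLinearMap.fst ℝ ℝ ℝ + b x • ContinuousLinearMap.snd ℝ ℝ ℝ :=
    funext fun x => clm_prod_ext (by simp) (by simp)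
  rw [hcoord]
  fun_prop

variable {F : ℝ × ℝ → ℝ} {a b x y m : ℝ} {z : ℝ × ℝ}

lemma hasDerivAt_fst_of_linForm (h : HasFDerivAt F (linForm a b) (x, y)) :
    HasDerivAt (fun x' => F (x', y)) a x :=
  (h.comp_hasDerivAt x ((hasDerivAt_id x).prodMk (hasDerivAt_const x y))).congr_deriv (by simp)

lemma hasDerivAt_snd_of_linForm (h : HasFDerivAt F (linForm a b) (x, y)) :
    HasDerivAt (fun y' => F (x, y')) b y :=
  (h.comp_hasDerivAt y ((hasDerivAt_const y x).prodMk (hasDerivAt_id y))).congr_deriv (by simp)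

lemma hasLineDerivAt_fst (h : HasDerivAt (fun x' => F (x', y)) m x) (c : ℝ) :
    HasLineDerivAt ℝ F (c * m) (x, y) (c, 0) := by
  have hpath : HasDerivAt (fun t : ℝ => x + t * c) c 0 := by
    simpa using ((hasDerivAt_id (0 : ℝ)).mul_const c).const_add x
  have hcomp := HasDerivAt.scomp (0 : ℝ) (g₁ := fun x' => F (x', y)) (by simpa using h) hpath
  simpa [HasLineDerivAt, Function.comp_def] using hcomp

lemma hasLineDerivAt_snd (h : HasDerivAt (fun y' => F (x, y')) m y) (c : ℝ) :
    HasLineDerivAt ℝ F (c * m) (x, y) (0, c) := by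
  have hpath : HasDerivAt (fun t : ℝ => y + t * c) c 0 := by
    simpa using ((hasDerivAt_id (0 : ℝ)).mul_const c).const_add y
  have hcomp := HasDerivAt.scomp (0 : ℝ) (g₁ := fun y' => F (x, y')) (by simpa using h) hpath
  simpa [HasLineDerivAt, Function.comp_def] using hcomp

lemma hasFDerivAt_linForm_comp {φ : ℝ → ℝ} {φ' : ℝ} (hF : HasFDerivAt F (linForm a b) z)
    (hφ : HasDerivAt φ φ' (F z)) :
    HasFDerivAt (fun w => φ (F w)) (linForm (φ' * a) (φ' * b)) z :=
  (hφ.comp_hasFDerivAt z hF).congr_fderiv (clm_prod_ext (by simp) (by simp))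

lemma hasDerivAt_intervalIntegral_of_continuous {W g : ℝ × ℝ → ℝ} (hW : Continuous W)
    (hg : Continuous g) (dW : ∀ a b, HasDerivAt (fun x => W (x, b)) (g (a, b)) a) (a c d : ℝ) :
    HasDerivAt (fun x => ∫ y in c..d, W (x, y)) (∫ y in c..d, g (a, y)) a := by
  obtain ⟨N, hN⟩ := (isCompact_Icc.prod isCompact_uIcc).exists_bound_of_continuousOn
    (s := Icc (a - 1) (a + 1) ×ˢ uIcc c d) hg.continuousOn
  have hWx : ∀ x, Continuous fun y => W (x, y) := fun x => by fun_prop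
  refine (intervalIntegral.hasDerivAt_integral_of_dominated_loc_of_deriv_le (μ := volume)
    (F := fun x y => W (x, y)) (F' := fun x y => g (x, y)) (bound := fun _ => N)
    (Icc_mem_nhds (by linarith : a - 1 < a) (by linarith : a < a + 1))
    (Eventually.of_forall fun x => (hWx x).aestronglyMeasurable) ((hWx a).intervalIntegrable _ _)
    (Continuous.aestronglyMeasurable (by fun_prop)) ?_ intervalIntegrable_const
    (ae_of_all _ fun y _ x _ => dW x y)).2
  exact ae_of_all _ fun y hy x hx => hN (x, y) ⟨hx, uIoc_subset_uIcc hy⟩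

lemma hasFDerivAt_linForm_of_hasDerivAt {V W : ℝ × ℝ → ℝ} (hV : Continuous V) (hW : Continuous W)
    (dFx : ∀ a b, HasDerivAt (fun x => F (x, b)) (V (a, b)) a)
    (dFy : ∀ a b, HasDerivAt (fun y => F (a, y)) (W (a, b)) b) (z : ℝ × ℝ) :
    HasFDerivAt F (linForm (V z) (W z)) z := by
  have hspan : Continuous (ContinuousLinearMap.toSpanSingleton ℝ : ℝ → ℝ →L[ℝ] ℝ) :=
    (ContinuousLinearMap.toSpanSingletonCLE (𝕜 := ℝ) (E := ℝ)).continuous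
  exact (hasStrictFDerivAt_uncurry_coprod (f := fun a b => F (a, b))
    (f₁ := fun a b => .toSpanSingleton ℝ (V (a, b)))
    (f₂ := fun a b => .toSpanSingleton ℝ (W (a, b)))
    (Eventually.of_forall fun v => (dFx v.1 v.2).hasFDerivAt)
    (Eventually.of_forall fun v => (dFy v.1 v.2).hasFDerivAt)
    (hspan.comp hV).continuousAt (hspan.comp hW).continuousAt).hasFDerivAt

/-- A continuous closed 1-form `V da + W db` on the plane is exact; here closedness only refers to
the mixed derivatives `∂_b V = ∂_a W = g`, so that `V` and `W` need not be differentiable. -/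
theorem exists_hasFDerivAt_linForm {V W g : ℝ × ℝ → ℝ} (hV : Continuous V) (hW : Continuous W)
    (hg : Continuous g) (dV : ∀ a b, HasDerivAt (fun y => V (a, y)) (g (a, b)) b)
    (dW : ∀ a b, HasDerivAt (fun x => W (x, b)) (g (a, b)) a) :
    ∃ F : ℝ × ℝ → ℝ, F 0 = 0 ∧ ∀ z, HasFDerivAt F (linForm (V z) (W z)) z := by
  let F : ℝ × ℝ → ℝ := fun z => (∫ y in 0..z.2, W (z.1, y)) + ∫ x in 0..z.1, V (x, 0)
  refine ⟨F, by simp [F], hasFDerivAt_linForm_of_hasDerivAt hV hW (fun a b => ?_) fun a b => ?_⟩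
  · have hmixed : ∫ y in 0..b, g (a, y) = V (a, b) - V (a, 0) :=
      intervalIntegral.integral_eq_sub_of_hasDerivAt (fun y _ => dV a y)
        (Continuous.intervalIntegrable (by fun_prop) _ _)
    have haxis : HasDerivAt (fun t => ∫ x in 0..t, V (x, 0)) (V (a, 0)) a :=
      (Continuous.integral_hasStrictDerivAt (by fun_prop) 0 a).hasDerivAt
    refine ((hasDerivAt_intervalIntegral_of_continuous hW hg dW a 0 b).add haxis).congr_deriv ?_
    rw [hmixed, sub_add_cancel]
  · exact (Continuous.integral_hasStrictDerivAt (f := fun y => W (a, y)) (by fun_prop)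
      0 b).hasDerivAt.add_const (∫ x in 0..a, V (x, 0))

end PlaneCalculus

section WeightedContraction

open scoped BoundedContinuousFunction NNReal

variable {X : Type*} [TopologicalSpace X] {w : X → ℝ} {Φ : (X → ℝ) → X → ℝ} {k : ℝ≥0} {C : ℝ}

/-- The Banach fixed point theorem in the space of continuous functions that are `O(w)`. -/
theorem exists_continuous_fixedPoint_of_weight (hw : Continuous w) (hw₀ : ∀ x, 0 < w x)
    (hΦ : ∀ g, Continuous g → Continuous (Φ g)) (hk : k < 1) (hΦ₀ : ∀ x, |Φ 0 x| ≤ C * w x)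
    (hlip : ∀ g g' c, Continuous g → Continuous g' → (∀ x, |g x - g' x| ≤ c * w x) →
      ∀ x, |Φ g x - Φ g' x| ≤ k * c * w x) :
    ∃ g, Continuous g ∧ Φ g = g := by
  have hdiff : ∀ h h' : X →ᵇ ℝ, ∀ x,
      |Φ (fun y => h y * w y) x / w x - Φ (fun y => h' y * w y) x / w x| ≤ k * dist h h' := by
    intro h h' x
    rw [← sub_div, abs_div, abs_of_pos (hw₀ x), div_le_iff₀ (hw₀ x)]
    refine hlip _ _ _ (by fun_prop) (by fun_prop) (fun y => ?_) x
    rw [← sub_mul, abs_mul, abs_of_pos (hw₀ y)]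
    exact mul_le_mul_of_nonneg_right
      (BoundedContinuousFunction.dist_coe_le_dist (f := h) (g := h') y) (hw₀ y).le
  have hbound : ∀ (h : X →ᵇ ℝ) x, ‖Φ (fun y => h y * w y) x / w x‖ ≤ k * dist h 0 + C := by
    intro h x
    have hzero : |Φ 0 x / w x| ≤ C := by
      rw [abs_div, abs_of_pos (hw₀ x), div_le_iff₀ (hw₀ x)]
      exact hΦ₀ x
    have hh := hdiff h 0 x
    simp only [BoundedContinuousFunction.coe_zero, Pi.zero_apply, zero_mul] at hh
    calc |Φ (fun y => h y * w y) x / w x|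
        ≤ |Φ (fun y => h y * w y) x / w x - Φ 0 x / w x| + |Φ 0 x / w x| := by
          simpa using abs_add_le (Φ (fun y => h y * w y) x / w x - Φ 0 x / w x) (Φ 0 x / w x)
      _ ≤ k * dist h 0 + C := add_le_add hh hzero
  let Ψ : (X →ᵇ ℝ) → X →ᵇ ℝ := fun h => BoundedContinuousFunction.ofNormedAddCommGroup
    (fun x => Φ (fun y => h y * w y) x / w x)
    ((hΦ _ (by fun_prop)).div hw fun x => (hw₀ x).ne') _ (hbound h)
  have hΨ : ContractingWith k Ψ := ⟨hk, LipschitzWith.of_dist_le_mul fun h h' =>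
    (BoundedContinuousFunction.dist_le (by positivity)).2 fun x => hdiff h h' x⟩
  let h := hΨ.fixedPoint
  refine ⟨fun y => h y * w y, by fun_prop, funext fun x => ?_⟩
  have hfix : Ψ h x = h x := by rw [hΨ.fixedPoint_isFixedPt]
  exact (div_eq_iff (hw₀ x).ne').1 hfix

end WeightedContraction

section Goursat

/-- `∫ y in a..b, g (a, y)` as a function of `(a, b)`; it is an antiderivative of `g` in the second
variable vanishing on the diagonal. -/
noncomputable def rowIntegral (g : ℝ × ℝ → ℝ) (z : ℝ × ℝ) : ℝ :=
  ∫ y in z.1..z.2, g (z.1, y)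

lemma rowIntegral_self (g : ℝ × ℝ → ℝ) (a : ℝ) : rowIntegral g (a, a) = 0 :=
  intervalIntegral.integral_same

lemma rowIntegral_sub {g g' : ℝ × ℝ → ℝ} (hg : Continuous g) (hg' : Continuous g') :
    rowIntegral (g - g') = rowIntegral g - rowIntegral g' :=
  funext fun _ => intervalIntegral.integral_sub (Continuous.intervalIntegrable (by fun_prop) _ _)
    (Continuous.intervalIntegrable (by fun_prop) _ _)

lemma hasDerivAt_rowIntegral {g : ℝ × ℝ → ℝ} (hg : Continuous g) (a b : ℝ) :
    HasDerivAt (fun y => rowIntegral g (a, y)) (g (a, b)) b :=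
  (Continuous.integral_hasStrictDerivAt (f := fun y => g (a, y)) (by fun_prop) a b).hasDerivAt

@[fun_prop]
lemma continuous_rowIntegral {g : ℝ × ℝ → ℝ} (hg : Continuous g) : Continuous (rowIntegral g) := by
  have hrow : ∀ a, Continuous fun y => g (a, y) := fun a => by fun_prop
  have hsplit : rowIntegral g = fun z : ℝ × ℝ =>
      (∫ y in 0..z.2, g (z.1, y)) - ∫ y in 0..z.1, g (z.1, y) := funext fun z =>
    (intervalIntegral.integral_interval_sub_left ((hrow z.1).intervalIntegrable _ _)
      ((hrow z.1).intervalIntegrable _ _)).symm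
  rw [hsplit]
  have hparam : Continuous (Function.uncurry fun (z : ℝ × ℝ) y => g (z.1, y)) := by fun_prop
  exact (intervalIntegral.continuous_parametric_intervalIntegral_of_continuous hparam
    continuous_snd).sub
    (intervalIntegral.continuous_parametric_intervalIntegral_of_continuous hparam continuous_fst)

/-- The exponential weight `cosh (K (b - a))`, in which the Goursat problem is a contraction. -/
noncomputable def coshWeight (K : ℝ) (z : ℝ × ℝ) : ℝ := cosh (K * (z.2 - z.1))

lemma coshWeight_pos (K : ℝ) (z : ℝ × ℝ) : 0 < coshWeight K z := cosh_pos _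

lemma one_le_coshWeight (K : ℝ) (z : ℝ × ℝ) : 1 ≤ coshWeight K z := one_le_cosh _

lemma coshWeight_swap (K : ℝ) (z : ℝ × ℝ) : coshWeight K z.swap = coshWeight K z := by
  rw [coshWeight, coshWeight, ← cosh_neg]
  simp only [Prod.fst_swap, Prod.snd_swap]
  ring_nf

@[fun_prop]
lemma continuous_coshWeight (K : ℝ) : Continuous (coshWeight K) := by
  unfold coshWeight
  fun_prop

lemma abs_sinh_le_cosh (x : ℝ) : |sinh x| ≤ cosh x :=
  abs_le_of_sq_le_sq (by rw [cosh_sq]; linarith) (cosh_pos x).le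

lemma abs_rowIntegral_coshWeight_le {K : ℝ} (hK : 0 < K) (z : ℝ × ℝ) :
    |rowIntegral (coshWeight K) z| ≤ coshWeight K z / K := by
  have hprim : ∀ y ∈ uIcc z.1 z.2,
      HasDerivAt (fun y => sinh (K * (y - z.1)) / K) (coshWeight K (z.1, y)) y := fun y _ =>
    ((((hasDerivAt_id y).sub_const z.1).const_mul K).sinh.div_const K).congr_deriv
      (by simp only [coshWeight, id_eq]; field_simp)
  have hval : rowIntegral (coshWeight K) z = sinh (K * (z.2 - z.1)) / K := by
    rw [rowIntegral, intervalIntegral.integral_eq_sub_of_hasDerivAt hprim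
      (Continuous.intervalIntegrable (by fun_prop) _ _)]
    simp
  rw [hval, abs_div, abs_of_pos hK]
  exact div_le_div_of_nonneg_right (abs_sinh_le_cosh _) hK.le

lemma abs_rowIntegral_le {K c : ℝ} (hK : 0 < K) {g : ℝ × ℝ → ℝ}
    (hgc : ∀ z, |g z| ≤ c * coshWeight K z) (z : ℝ × ℝ) :
    |rowIntegral g z| ≤ c / K * coshWeight K z := by
  have hc : 0 ≤ c := nonneg_of_mul_nonneg_left ((abs_nonneg _).trans (hgc 0)) (coshWeight_pos K 0)
  have hrow : Continuous fun y => c * coshWeight K (z.1, y) := by fun_prop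
  calc |rowIntegral g z| ≤ |∫ y in z.1..z.2, c * coshWeight K (z.1, y)| := by
        rw [rowIntegral, ← Real.norm_eq_abs]
        exact intervalIntegral.norm_integral_le_abs_of_norm_le (ae_of_all _ fun y => hgc _)
          (hrow.intervalIntegrable _ _)
    _ = c * |rowIntegral (coshWeight K) z| := by
        rw [intervalIntegral.integral_const_mul, abs_mul, abs_of_nonneg hc, rowIntegral]
    _ ≤ c * (coshWeight K z / K) := by gcongr; exact abs_rowIntegral_coshWeight_le hK z
    _ = c / K * coshWeight K z := by ring

/-- `(V, W)` solves the linear hyperbolic system `∂_b V = ∂_a W = p W - q V` on the plane. -/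
structure IsGoursatPair (p q V W : ℝ × ℝ → ℝ) : Prop where
  continuous_left : Continuous V
  continuous_right : Continuous W
  hasDerivAt_left : ∀ a b, HasDerivAt (fun y => V (a, y))
    (p (a, b) * W (a, b) - q (a, b) * V (a, b)) b
  hasDerivAt_right : ∀ a b, HasDerivAt (fun x => W (x, b))
    (p (a, b) * W (a, b) - q (a, b) * V (a, b)) a

/-- `(V, W)` solves the Goursat problem: the system of `IsGoursatPair` with `V = W = 1` on the
diagonal. -/
structure IsGoursatSolution (p q V W : ℝ × ℝ → ℝ) : Prop extends IsGoursatPair p q V W where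
  left_diag : ∀ a, V (a, a) = 1
  right_diag : ∀ a, W (a, a) = 1

variable {p q : ℝ × ℝ → ℝ} {B : ℝ}

/-- The map whose fixed points are the mixed derivatives `g = ∂_b V = ∂_a W` of solutions of the
Goursat problem. -/
noncomputable def goursatMap (p q g : ℝ × ℝ → ℝ) (z : ℝ × ℝ) : ℝ :=
  p z * (1 + rowIntegral (g ∘ Prod.swap) z.swap) - q z * (1 + rowIntegral g z)

lemma continuous_goursatMap (hp : Continuous p) (hq : Continuous q) {g : ℝ × ℝ → ℝ}
    (hg : Continuous g) : Continuous (goursatMap p q g) := by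
  have : Continuous (g ∘ Prod.swap) := by fun_prop
  unfold goursatMap
  fun_prop

lemma abs_goursatMap_sub_le (hpB : ∀ z, |p z| ≤ B) (hqB : ∀ z, |q z| ≤ B) {K c : ℝ} (hK : 0 < K)
    {g g' : ℝ × ℝ → ℝ} (hg : Continuous g) (hg' : Continuous g')
    (hgc : ∀ z, |g z - g' z| ≤ c * coshWeight K z) (z : ℝ × ℝ) :
    |goursatMap p q g z - goursatMap p q g' z| ≤ 2 * B / K * c * coshWeight K z := by
  have hB : 0 ≤ B := (abs_nonneg _).trans (hpB 0)
  have hrow : |rowIntegral (g - g') z| ≤ c / K * coshWeight K z := abs_rowIntegral_le hK hgc z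
  have hcol : |rowIntegral ((g - g') ∘ Prod.swap) z.swap| ≤ c / K * coshWeight K z := by
    rw [← coshWeight_swap]
    refine abs_rowIntegral_le hK (fun y => ?_) _
    rw [← coshWeight_swap]
    exact hgc y.swap
  have hdiff : goursatMap p q g z - goursatMap p q g' z =
      p z * rowIntegral ((g - g') ∘ Prod.swap) z.swap - q z * rowIntegral (g - g') z := by
    have hcomp : (g - g') ∘ Prod.swap = g ∘ Prod.swap - g' ∘ Prod.swap := rfl
    rw [hcomp, rowIntegral_sub hg hg', rowIntegral_sub (hg.comp continuous_swap)
      (hg'.comp continuous_swap)]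
    simp only [goursatMap, Pi.sub_apply]
    ring
  calc |goursatMap p q g z - goursatMap p q g' z|
      ≤ |p z| * |rowIntegral ((g - g') ∘ Prod.swap) z.swap| + |q z| * |rowIntegral (g - g') z| := by
        rw [hdiff, ← abs_mul, ← abs_mul]
        exact abs_sub _ _
    _ ≤ B * (c / K * coshWeight K z) + B * (c / K * coshWeight K z) :=
        add_le_add (mul_le_mul (hpB z) hcol (abs_nonneg _) hB)
          (mul_le_mul (hqB z) hrow (abs_nonneg _) hB)
    _ = 2 * B / K * c * coshWeight K z := by ring

lemma exists_goursatMap_fixedPoint (hp : Continuous p) (hq : Continuous q) (hpB : ∀ z, |p z| ≤ B)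
    (hqB : ∀ z, |q z| ≤ B) : ∃ g, Continuous g ∧ goursatMap p q g = g := by
  have hB : 0 ≤ B := (abs_nonneg _).trans (hpB 0)
  have hK : 0 < 4 * B + 1 := by positivity
  refine exists_continuous_fixedPoint_of_weight (w := coshWeight (4 * B + 1)) (k := 1 / 2)
    (C := 2 * B) (by fun_prop) (coshWeight_pos _) (fun g => continuous_goursatMap hp hq)
    (by rw [← NNReal.coe_lt_coe]; norm_num) (fun z => ?_) fun g g' c hg hg' hc z => ?_
  · have hzero : goursatMap p q 0 z = p z - q z := by simp [goursatMap, rowIntegral]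
    calc |goursatMap p q 0 z| ≤ |p z| + |q z| := hzero ▸ abs_sub _ _
      _ ≤ 2 * B := by linarith [hpB z, hqB z]
      _ ≤ 2 * B * coshWeight (4 * B + 1) z :=
        le_mul_of_one_le_right (by positivity) (one_le_coshWeight _ z)
  · have hc₀ : 0 ≤ c := nonneg_of_mul_nonneg_left ((abs_nonneg _).trans (hc z)) (coshWeight_pos _ z)
    have hhalf : 2 * B / (4 * B + 1) ≤ 1 / 2 := by
      rw [div_le_iff₀ hK]
      linarith
    refine (abs_goursatMap_sub_le hpB hqB hK hg hg' hc z).trans ?_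
    push_cast
    gcongr
    exact (coshWeight_pos _ z).le

theorem exists_isGoursatSolution (hp : Continuous p) (hq : Continuous q) (hpB : ∀ z, |p z| ≤ B)
    (hqB : ∀ z, |q z| ≤ B) : ∃ V W, IsGoursatSolution p q V W := by
  obtain ⟨g, hg, hfix⟩ := exists_goursatMap_fixedPoint hp hq hpB hqB
  have hswap : Continuous (g ∘ Prod.swap) := by fun_prop
  refine ⟨fun z => 1 + rowIntegral g z, fun z => 1 + rowIntegral (g ∘ Prod.swap) z.swap,
    ⟨by fun_prop, by fun_prop, fun a b => ?_, fun a b => ?_⟩, fun a => ?_, fun a => ?_⟩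
  · exact ((hasDerivAt_rowIntegral hg a b).const_add 1).congr_deriv (congrFun hfix (a, b)).symm
  · exact ((hasDerivAt_rowIntegral hswap b a).const_add 1).congr_deriv (congrFun hfix (a, b)).symm
  · simp only [rowIntegral_self, add_zero]
  · simp only [Prod.swap_prod_mk, rowIntegral_self, add_zero]

/-- The characteristic triangle `a₀ ≤ a ≤ b ≤ b₀` below the point `(a₀, b₀)`, which is its domain of
dependence in the half-plane `a ≤ b`. -/
def goursatTriangle (a₀ b₀ : ℝ) : Set (ℝ × ℝ) := {z | a₀ ≤ z.1 ∧ z.1 ≤ z.2 ∧ z.2 ≤ b₀}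

lemma isCompact_goursatTriangle (a₀ b₀ : ℝ) : IsCompact (goursatTriangle a₀ b₀) := by
  refine (isCompact_Icc (a := (a₀, a₀)) (b := (b₀, b₀))).of_isClosed_subset ?_ ?_
  · exact (isClosed_le continuous_const continuous_fst).inter
      ((isClosed_le continuous_fst continuous_snd).inter
        (isClosed_le continuous_snd continuous_const))
  · exact fun z hz => ⟨⟨hz.1, hz.1.trans hz.2.1⟩, ⟨hz.2.1.trans hz.2.2, hz.2.2⟩⟩

lemma convex_goursatTriangle (a₀ b₀ : ℝ) : Convex ℝ (goursatTriangle a₀ b₀) := by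
  rintro ⟨a, b⟩ ⟨ha, hab, hb⟩ ⟨a', b'⟩ ⟨ha', hab', hb'⟩ μ ν hμ hν hμν
  refine ⟨?_, add_le_add (mul_le_mul_of_nonneg_left hab hμ) (mul_le_mul_of_nonneg_left hab' hν), ?_⟩
  · exact convex_Ici a₀ ha ha' hμ hν hμν
  · exact convex_Iic b₀ hb hb' hμ hν hμν

lemma forall_neg_on_goursatTriangle {F G Fb Ga : ℝ × ℝ → ℝ} {a₀ b₀ : ℝ} (hF : Continuous F)
    (hG : Continuous G) (dF : ∀ a b, HasDerivAt (fun y => F (a, y)) (Fb (a, b)) b)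
    (dG : ∀ a b, HasDerivAt (fun x => G (x, b)) (Ga (a, b)) a)
    (hF₀ : ∀ a, F (a, a) < 0) (hG₀ : ∀ a, G (a, a) < 0)
    (hFb : ∀ z ∈ goursatTriangle a₀ b₀, F z = 0 → G z ≤ 0 → Fb z < 0)
    (hGa : ∀ z ∈ goursatTriangle a₀ b₀, G z = 0 → F z ≤ 0 → 0 < Ga z) :
    ∀ z ∈ goursatTriangle a₀ b₀, F z < 0 ∧ G z < 0 := by
  suffices hneg : ∀ i : Bool, ∀ z ∈ goursatTriangle a₀ b₀, (bif i then F else G) z < 0 from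
    fun z hz => ⟨hneg true z hz, hneg false z hz⟩
  have hdiag : ∀ (i : Bool) a, (bif i then F else G) (a, a) < 0 := by
    rintro (_ | _) <;> assumption
  refine forall_neg_of_hasLineDerivAt_pos (isCompact_goursatTriangle a₀ b₀)
    (convex_goursatTriangle a₀ b₀) (linForm (-1) 1) ?_ ?_ ?_
  · rintro (_ | _) <;> exact Continuous.continuousOn ‹_›
  · rintro ⟨a, b⟩ ⟨ha, hab, hb⟩ hmin i
    have hba := hmin (a, a) ⟨ha, le_rfl, hab.trans hb⟩
    simp only [linForm_apply] at hba
    obtain rfl : a = b := le_antisymm hab (by linarith)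
    exact hdiag i a
  · rintro ⟨a, b⟩ hz hle i hi
    obtain ⟨ha, hab, hb⟩ := id hz
    have hlt : a < b := lt_of_le_of_ne hab fun (hab : a = b) => by
      subst hab
      exact (hdiag i a).ne hi
    cases i
    · refine ⟨(b, b), ⟨ha.trans hab, le_rfl, hb⟩, by simpa using hlt, (b - a) * Ga (a, b), ?_,
        mul_pos (sub_pos.2 hlt) (hGa _ hz hi (hle true))⟩
      simpa using hasLineDerivAt_fst (dG a b) (b - a)
    · refine ⟨(a, a), ⟨ha, le_rfl, hab.trans hb⟩, by simpa using hlt, (a - b) * Fb (a, b), ?_,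
        mul_pos_of_neg_of_neg (sub_neg.2 hlt) (hFb _ hz hi (hle false))⟩
      simpa using hasLineDerivAt_snd (dF a b) (a - b)

lemma mul_sub_mul_lt_of_barrier {m n y z E Λ : ℝ} (hE : 0 < E) (hm : 0 ≤ m) (hn : 0 ≤ n)
    (hmΛ : m < Λ) (hy : -y - E = 0) (hz : -z - E ≤ 0) : -(m * z - n * y) - Λ * E < 0 := by
  obtain rfl : y = -E := by linarith
  have hmz : m * (-E) ≤ m * z := mul_le_mul_of_nonneg_left (by linarith) hm
  linarith [mul_pos (sub_pos.2 hmΛ) hE, mul_nonneg hn hE.le]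

variable {m n Y Z : ℝ × ℝ → ℝ}

/-- The barrier is `-E` with `E = ε exp (Λ (b - a))`. -/
lemma IsGoursatPair.neg_barrier_lt (h : IsGoursatPair m n Y Z) {a₀ b₀ Λ ε : ℝ} (hε : 0 < ε)
    (hm : ∀ z : ℝ × ℝ, z.1 ≤ z.2 → 0 ≤ m z) (hn : ∀ z : ℝ × ℝ, z.1 ≤ z.2 → 0 ≤ n z)
    (hmΛ : ∀ z ∈ goursatTriangle a₀ b₀, m z < Λ) (hnΛ : ∀ z ∈ goursatTriangle a₀ b₀, n z < Λ)
    (hY : ∀ a, 0 ≤ Y (a, a)) (hZ : ∀ a, 0 ≤ Z (a, a)) :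
    ∀ z ∈ goursatTriangle a₀ b₀,
      -Y z - ε * exp (Λ * (z.2 - z.1)) < 0 ∧ -Z z - ε * exp (Λ * (z.2 - z.1)) < 0 := by
  have cY := h.continuous_left
  have cZ := h.continuous_right
  refine forall_neg_on_goursatTriangle
    (Fb := fun z => -(m z * Z z - n z * Y z) - Λ * (ε * exp (Λ * (z.2 - z.1))))
    (Ga := fun z => -(m z * Z z - n z * Y z) + Λ * (ε * exp (Λ * (z.2 - z.1))))
    (by fun_prop) (by fun_prop) (fun a b => ?_) (fun a b => ?_) (fun a => ?_) (fun a => ?_)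
    (fun z hz hYz hZz => ?_) fun z hz hZz hYz => ?_
  · have hE := (((hasDerivAt_id b).sub_const a).const_mul Λ).exp.const_mul ε
    exact ((h.hasDerivAt_left a b).neg.sub hE).congr_deriv (by simp only [id_eq]; ring)
  · have hE := (((hasDerivAt_id a).const_sub b).const_mul Λ).exp.const_mul ε
    exact ((h.hasDerivAt_right a b).neg.sub hE).congr_deriv (by simp only [id_eq]; ring)
  · simp only [sub_self, mul_zero, exp_zero, mul_one]
    linarith [hY a]
  · simp only [sub_self, mul_zero, exp_zero, mul_one]
    linarith [hZ a]
  · exact mul_sub_mul_lt_of_barrier (by positivity) (hm z hz.2.1) (hn z hz.2.1) (hmΛ z hz) hYz hZz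
  · have hlt := mul_sub_mul_lt_of_barrier (by positivity) (hn z hz.2.1) (hm z hz.2.1) (hnΛ z hz)
      hZz hYz
    linarith

theorem IsGoursatPair.nonneg (h : IsGoursatPair m n Y Z) (hmc : Continuous m) (hnc : Continuous n)
    (hm : ∀ z : ℝ × ℝ, z.1 ≤ z.2 → 0 ≤ m z) (hn : ∀ z : ℝ × ℝ, z.1 ≤ z.2 → 0 ≤ n z)
    (hY : ∀ a, 0 ≤ Y (a, a)) (hZ : ∀ a, 0 ≤ Z (a, a)) {z : ℝ × ℝ} (hz : z.1 ≤ z.2) :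
    0 ≤ Y z ∧ 0 ≤ Z z := by
  obtain ⟨N, hN⟩ := (isCompact_goursatTriangle z.1 z.2).exists_bound_of_continuousOn
    (hmc.prodMk hnc).continuousOn
  have hmN : ∀ w ∈ goursatTriangle z.1 z.2, m w < N + 1 := fun w hw =>
    ((le_abs_self _).trans ((norm_fst_le _).trans (hN w hw))).trans_lt (lt_add_one N)
  have hnN : ∀ w ∈ goursatTriangle z.1 z.2, n w < N + 1 := fun w hw =>
    ((le_abs_self _).trans ((norm_snd_le _).trans (hN w hw))).trans_lt (lt_add_one N)
  have hbarrier : ∀ ε > 0, -Y z - ε * exp ((N + 1) * (z.2 - z.1)) < 0 ∧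
      -Z z - ε * exp ((N + 1) * (z.2 - z.1)) < 0 := fun ε hε =>
    h.neg_barrier_lt hε hm hn hmN hnN hY hZ z ⟨le_rfl, hz, le_rfl⟩
  have nonneg_of_barrier :
      ∀ y : ℝ, (∀ ε > 0, -y - ε * exp ((N + 1) * (z.2 - z.1)) < 0) → 0 ≤ y := by
    refine fun y hy => le_of_forall_pos_le_add fun δ hδ => ?_
    have hyδ := hy (δ / exp ((N + 1) * (z.2 - z.1))) (by positivity)
    rw [div_mul_cancel₀ _ (exp_pos _).ne'] at hyδ
    linarith
  exact ⟨nonneg_of_barrier _ fun ε hε => (hbarrier ε hε).1,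
    nonneg_of_barrier _ fun ε hε => (hbarrier ε hε).2⟩

end Goursat

section GlobalInversion

variable {E F : Type*} [NormedAddCommGroup E] [NormedSpace ℝ E] [ProperSpace E]
  [NormedAddCommGroup F] [NormedSpace ℝ F]

/-- Hadamard's global inverse function theorem, for antilipschitz maps: the range is open because
the derivative is invertible and closed because the map is proper. -/
theorem exists_homeomorph_of_antilipschitzWith {f : E → F} {f' : E → E ≃L[ℝ] F} {K : NNReal}
    (hf : ContDiff ℝ 1 f) (hf' : ∀ z, HasFDerivAt f (f' z : E →L[ℝ] F) z)
    (hK : AntilipschitzWith K f) :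
    ∃ Φ : E ≃ₜ F, ⇑Φ = f ∧ ContDiff ℝ 1 Φ.symm ∧
      ∀ y, HasFDerivAt Φ.symm ((f' (Φ.symm y)).symm : F →L[ℝ] E) y := by
  have hopen : IsOpenMap f := isOpenMap_of_hasStrictFDerivAt_equiv fun z =>
    hf.contDiffAt.hasStrictFDerivAt' (hf' z) one_ne_zero
  have hproper : IsProperMap f := isProperMap_iff_isCompact_preimage.2 ⟨hf.continuous, fun s hs =>
    Metric.isCompact_of_isClosed_isBounded (hs.isClosed.preimage hf.continuous)
      (hK.isBounded_preimage hs.isBounded)⟩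
  have hsurj : range f = univ := IsClopen.eq_univ
    ⟨hproper.isClosedMap.isClosed_range, hopen.isOpen_range⟩ ⟨f 0, mem_range_self 0⟩
  let Φ := (Equiv.ofBijective f ⟨hK.injective, range_eq_univ.1 hsurj⟩).toHomeomorphOfContinuousOpen
    hf.continuous hopen
  exact ⟨Φ, rfl, Φ.contDiff_symm hf' hf, fun y => HasFDerivAt.of_local_left_inverse
    Φ.symm.continuous.continuousAt (hf' _) (Eventually.of_forall Φ.apply_symm_apply)⟩

end GlobalInversion

section CharacteristicInversion

/-- The linear equivalence `(a, b) ↦ (c (P a + Q b), -P a + Q b)`: the differential of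
`(a, b) ↦ (x, t)` where the two families of characteristics have speeds `±c`, that is,
`dx = -c dt` along `db = 0` and `dx = c dt` along `da = 0`. -/
noncomputable def characteristicEquiv {c P Q : ℝ} (hc : c ≠ 0) (hP : P ≠ 0) (hQ : Q ≠ 0) :
    (ℝ × ℝ) ≃L[ℝ] (ℝ × ℝ) :=
  ContinuousLinearEquiv.equivOfInverse ((linForm (c * P) (c * Q)).prod (linForm (-P) Q))
    ((linForm (2 * c * P)⁻¹ (-(2 * P)⁻¹)).prod (linForm (2 * c * Q)⁻¹ (2 * Q)⁻¹))
    (fun z => Prod.ext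
      (by simp only [ContinuousLinearMap.prod_apply, linForm_apply]; field_simp; ring)
      (by simp only [ContinuousLinearMap.prod_apply, linForm_apply]; field_simp; ring))
    (fun z => Prod.ext
      (by simp only [ContinuousLinearMap.prod_apply, linForm_apply]; field_simp; ring)
      (by simp only [ContinuousLinearMap.prod_apply, linForm_apply]; field_simp; ring))

lemma mul_norm_le_abs_linForm {a b δ : ℝ} (hδ : 0 ≤ δ) (ha : δ ≤ a) (hb : δ ≤ b) {v : ℝ × ℝ}
    (hv : 0 ≤ v.1 * v.2) : δ * ‖v‖ ≤ |linForm a b v| := by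
  have ha₀ : 0 ≤ a := hδ.trans ha
  have hb₀ : 0 ≤ b := hδ.trans hb
  have habs : |linForm a b v| = a * |v.1| + b * |v.2| := by
    rw [linForm_apply, (abs_add_eq_add_abs_iff _ _).2, abs_mul, abs_mul, abs_of_nonneg ha₀,
      abs_of_nonneg hb₀]
    exact (mul_nonneg_iff.1 hv).imp (fun h => ⟨mul_nonneg ha₀ h.1, mul_nonneg hb₀ h.2⟩)
      fun h => ⟨mul_nonpos_of_nonneg_of_nonpos ha₀ h.1, mul_nonpos_of_nonneg_of_nonpos hb₀ h.2⟩
  rw [habs, Prod.norm_def, mul_max_of_nonneg _ _ hδ]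
  exact max_le
    (le_add_of_le_of_nonneg (mul_le_mul_of_nonneg_right ha (abs_nonneg _)) (by positivity))
    (le_add_of_nonneg_of_le (by positivity) (mul_le_mul_of_nonneg_right hb (abs_nonneg _)))

variable {X T c P Q : ℝ × ℝ → ℝ} {δ : ℝ}

/-- When both coordinates move in the same direction `X` grows, otherwise `T` does. -/
lemma antilipschitzWith_of_characteristic (hδ : 0 < δ)
    (hX : ∀ z, HasFDerivAt X (linForm (c z * P z) (c z * Q z)) z)
    (hT : ∀ z, HasFDerivAt T (linForm (-P z) (Q z)) z)
    (hcP : ∀ z, δ ≤ c z * P z) (hcQ : ∀ z, δ ≤ c z * Q z) (hP : ∀ z, δ ≤ P z) (hQ : ∀ z, δ ≤ Q z) :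
    AntilipschitzWith (Real.toNNReal δ⁻¹) fun z => (X z, T z) := by
  refine AntilipschitzWith.of_le_mul_dist fun z w => ?_
  rw [Real.coe_toNNReal _ (by positivity), inv_mul_eq_div, le_div_iff₀' hδ, dist_eq_norm,
    dist_eq_norm]
  obtain ⟨ξ, -, hξ⟩ := domain_mvt (fun z _ => (hX z).hasFDerivWithinAt) convex_univ
    (mem_univ w) (mem_univ z)
  obtain ⟨θ, -, hθ⟩ := domain_mvt (fun z _ => (hT z).hasFDerivWithinAt) convex_univ
    (mem_univ w) (mem_univ z)
  rcases le_total 0 ((z - w).1 * (z - w).2) with hv | hv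
  · calc δ * ‖z - w‖ ≤ |X z - X w| :=
          hξ ▸ mul_norm_le_abs_linForm hδ.le (hcP ξ) (hcQ ξ) hv
      _ ≤ ‖(X z, T z) - (X w, T w)‖ := le_max_left _ _
  · have hreflect : linForm (P θ) (Q θ) (-(z - w).1, (z - w).2) = T z - T w := by
      rw [hθ, linForm_apply, linForm_apply]
      ring
    calc δ * ‖z - w‖ = δ * ‖(-(z - w).1, (z - w).2)‖ := by
          rw [Prod.norm_def, Prod.norm_def, norm_neg]
      _ ≤ |T z - T w| :=
          hreflect ▸ mul_norm_le_abs_linForm hδ.le (hP θ) (hQ θ)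
            (by rw [neg_mul]; exact neg_nonneg.2 hv)
      _ ≤ ‖(X z, T z) - (X w, T w)‖ := le_max_right _ _

theorem exists_inverse_of_characteristic (hδ : 0 < δ)
    (hX : ∀ z, HasFDerivAt X (linForm (c z * P z) (c z * Q z)) z)
    (hT : ∀ z, HasFDerivAt T (linForm (-P z) (Q z)) z)
    (hc : Continuous c) (hPc : Continuous P) (hQc : Continuous Q)
    (hcP : ∀ z, δ ≤ c z * P z) (hcQ : ∀ z, δ ≤ c z * Q z) (hP : ∀ z, δ ≤ P z) (hQ : ∀ z, δ ≤ Q z) :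
    ∃ Ψ : ℝ × ℝ → ℝ × ℝ, ContDiff ℝ 1 Ψ ∧ ∀ y, X (Ψ y) = y.1 ∧ T (Ψ y) = y.2 ∧
      HasFDerivAt (fun y => (Ψ y).1) (linForm (2 * c (Ψ y) * P (Ψ y))⁻¹ (-(2 * P (Ψ y))⁻¹)) y ∧
      HasFDerivAt (fun y => (Ψ y).2) (linForm (2 * c (Ψ y) * Q (Ψ y))⁻¹ (2 * Q (Ψ y))⁻¹) y := by
  have hP₀ : ∀ z, P z ≠ 0 := fun z => (hδ.trans_le (hP z)).ne'
  have hQ₀ : ∀ z, Q z ≠ 0 := fun z => (hδ.trans_le (hQ z)).ne'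
  have hc₀ : ∀ z, c z ≠ 0 := fun z => left_ne_zero_of_mul (hδ.trans_le (hcP z)).ne'
  have hΦ : ∀ z, HasFDerivAt (fun z => (X z, T z))
      (characteristicEquiv (hc₀ z) (hP₀ z) (hQ₀ z) : ℝ × ℝ →L[ℝ] ℝ × ℝ) z :=
    fun z => (hX z).prodMk (hT z)
  have hX₁ : ContDiff ℝ 1 X := contDiff_one_iff_hasFDerivAt.2 ⟨_, by fun_prop, hX⟩
  have hT₁ : ContDiff ℝ 1 T := contDiff_one_iff_hasFDerivAt.2 ⟨_, by fun_prop, hT⟩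
  obtain ⟨Φ, hΦeq, hΨ, dΨ⟩ := exists_homeomorph_of_antilipschitzWith (hX₁.prodMk hT₁) hΦ
    (antilipschitzWith_of_characteristic hδ hX hT hcP hcQ hP hQ)
  have hinv : ∀ y, (X (Φ.symm y), T (Φ.symm y)) = y := fun y => by
    simpa only [hΦeq] using Φ.apply_symm_apply y
  exact ⟨Φ.symm, hΨ, fun y => ⟨congrArg Prod.fst (hinv y), congrArg Prod.snd (hinv y),
    (dΨ y).fst, (dΨ y).snd⟩⟩

end CharacteristicInversion

section SwapGlue

/-- The function equal to `F` on `{a ≤ b}` and to `G (b, a)` on `{b < a}`. -/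
noncomputable def swapGlue (F G : ℝ × ℝ → ℝ) (z : ℝ × ℝ) : ℝ :=
  if z.1 ≤ z.2 then F z else G z.swap

variable {F G : ℝ × ℝ → ℝ} {z : ℝ × ℝ}

lemma swapGlue_of_le (hz : z.1 ≤ z.2) : swapGlue F G z = F z := if_pos hz

lemma swapGlue_of_lt (hz : z.2 < z.1) : swapGlue F G z = G z.swap := if_neg hz.not_ge

lemma forall_swapGlue {p : ℝ → Prop} (hF : ∀ z : ℝ × ℝ, z.1 ≤ z.2 → p (F z))
    (hG : ∀ z : ℝ × ℝ, z.1 ≤ z.2 → p (G z)) (z : ℝ × ℝ) : p (swapGlue F G z) := by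
  rcases le_or_gt z.1 z.2 with hz | hz
  · exact swapGlue_of_le hz ▸ hF z hz
  · exact swapGlue_of_lt hz ▸ hG z.swap hz.le

lemma swapGlue_of_ge (hdiag : ∀ a, F (a, a) = G (a, a)) (hz : z.2 ≤ z.1) :
    swapGlue F G z = G z.swap := by
  rcases hz.lt_or_eq with hlt | heq
  · exact swapGlue_of_lt hlt
  · obtain ⟨a, b⟩ := z
    obtain rfl : b = a := heq
    rw [swapGlue_of_le le_rfl, hdiag, Prod.swap_prod_mk]

lemma continuous_swapGlue (hF : Continuous F) (hG : Continuous G)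
    (hdiag : ∀ a, F (a, a) = G (a, a)) : Continuous (swapGlue F G) := by
  refine Continuous.if_le hF (hG.comp continuous_swap) continuous_fst continuous_snd ?_
  rintro ⟨a, b⟩ (rfl : a = b)
  exact hdiag a

lemma hasFDerivAt_linForm_swap {a b : ℝ} (hF : HasFDerivAt F (linForm a b) z.swap) :
    HasFDerivAt (fun w => F w.swap) (linForm b a) z :=
  (hF.comp z (ContinuousLinearEquiv.prodComm ℝ ℝ ℝ).hasFDerivAt).congr_fderiv
    (clm_prod_ext (by simp) (by simp))

lemma hasFDerivAt_swapGlue {A B A' B' : ℝ × ℝ → ℝ} (hF : ∀ z, HasFDerivAt F (linForm (A z) (B z)) z)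
    (hG : ∀ z, HasFDerivAt G (linForm (A' z) (B' z)) z) (hFG : ∀ a, F (a, a) = G (a, a))
    (hA : ∀ a, A (a, a) = B' (a, a)) (hB : ∀ a, B (a, a) = A' (a, a)) (z : ℝ × ℝ) :
    HasFDerivAt (swapGlue F G) (linForm (swapGlue A B' z) (swapGlue B A' z)) z := by
  have hle : HasFDerivWithinAt (swapGlue F G) (linForm (swapGlue A B' z) (swapGlue B A' z))
      {w | w.1 ≤ w.2} z := by
    by_cases hz : z.1 ≤ z.2
    · rw [swapGlue_of_le hz, swapGlue_of_le hz]
      exact (hF z).hasFDerivWithinAt.congr (fun w hw => swapGlue_of_le hw) (swapGlue_of_le hz)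
    · refine .of_notMem_closure ?_
      rwa [(isClosed_le continuous_fst continuous_snd).closure_eq]
  have hge : HasFDerivWithinAt (swapGlue F G) (linForm (swapGlue A B' z) (swapGlue B A' z))
      {w | w.2 ≤ w.1} z := by
    by_cases hz : z.2 ≤ z.1
    · rw [swapGlue_of_ge hA hz, swapGlue_of_ge hB hz]
      exact (hasFDerivAt_linForm_swap (hG _)).hasFDerivWithinAt.congr
        (fun w hw => swapGlue_of_ge hFG hw) (swapGlue_of_ge hFG hz)
    · refine .of_notMem_closure ?_
      rwa [(isClosed_le continuous_snd continuous_fst).closure_eq]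
  rw [← hasFDerivWithinAt_univ]
  exact (hle.union hge).mono fun w _ => le_total w.1 w.2

end SwapGlue

section HalfPlaneInversion

variable {X T c P Q : ℝ × ℝ → ℝ} {δ : ℝ}

/-- Reflecting `x` evenly and `t` oddly across the diagonal reduces this to a map of the plane. -/
theorem exists_inverse_of_characteristic_halfPlane (hδ : 0 < δ)
    (hX : ∀ z, HasFDerivAt X (linForm (c z * P z) (c z * Q z)) z)
    (hT : ∀ z, HasFDerivAt T (linForm (-P z) (Q z)) z)
    (hc : Continuous c) (hPc : Continuous P) (hQc : Continuous Q)
    (hcP : ∀ z : ℝ × ℝ, z.1 ≤ z.2 → δ ≤ c z * P z) (hcQ : ∀ z : ℝ × ℝ, z.1 ≤ z.2 → δ ≤ c z * Q z)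
    (hP : ∀ z : ℝ × ℝ, z.1 ≤ z.2 → δ ≤ P z) (hQ : ∀ z : ℝ × ℝ, z.1 ≤ z.2 → δ ≤ Q z)
    (hPQ : ∀ a, P (a, a) = Q (a, a)) (hT₀ : ∀ a, T (a, a) = 0) :
    ∃ Ψ : ℝ × ℝ → ℝ × ℝ, ContDiff ℝ 1 Ψ ∧ ∀ y : ℝ × ℝ, 0 ≤ y.2 →
      (Ψ y).1 ≤ (Ψ y).2 ∧ (y.2 = 0 → (Ψ y).1 = (Ψ y).2) ∧ X (Ψ y) = y.1 ∧ T (Ψ y) = y.2 ∧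
      HasFDerivAt (fun y => (Ψ y).1) (linForm (2 * c (Ψ y) * P (Ψ y))⁻¹ (-(2 * P (Ψ y))⁻¹)) y ∧
      HasFDerivAt (fun y => (Ψ y).2) (linForm (2 * c (Ψ y) * Q (Ψ y))⁻¹ (2 * Q (Ψ y))⁻¹) y := by
  have hmul : ∀ P Q z, swapGlue (fun z => c z * P z) (fun z => c z * Q z) z =
      swapGlue c c z * swapGlue P Q z := fun P Q z => by
    unfold swapGlue
    split_ifs <;> rfl
  have hneg : ∀ z, swapGlue (fun z => -P z) (fun z => -Q z) z = -swapGlue P Q z := fun z => by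
    unfold swapGlue
    split_ifs <;> rfl
  have hX' : ∀ z, HasFDerivAt (swapGlue X X)
      (linForm (swapGlue c c z * swapGlue P Q z) (swapGlue c c z * swapGlue Q P z)) z := fun z => by
    rw [← hmul, ← hmul]
    exact hasFDerivAt_swapGlue hX hX (fun a => rfl) (fun a => by simp only [hPQ])
      (fun a => by simp only [hPQ]) z
  have hT' : ∀ z, HasFDerivAt (swapGlue T fun z => -T z)
      (linForm (-swapGlue P Q z) (swapGlue Q P z)) z := fun z => by
    rw [← hneg]
    refine hasFDerivAt_swapGlue hT (A' := P) (B' := fun z => -Q z) (fun z => ?_)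
      (fun a => by rw [hT₀, neg_zero]) (fun a => by simp only [hPQ]) (fun a => (hPQ a).symm) z
    exact (hT z).neg.congr_fderiv (clm_prod_ext (by simp) (by simp))
  have hQP : ∀ a, Q (a, a) = P (a, a) := fun a => (hPQ a).symm
  obtain ⟨Ψ, hΨ, hinv⟩ := exists_inverse_of_characteristic hδ hX' hT'
    (continuous_swapGlue hc hc fun a => rfl) (continuous_swapGlue hPc hQc hPQ)
    (continuous_swapGlue hQc hPc hQP) (fun z => hmul P Q z ▸ forall_swapGlue hcP hcQ z)
    (fun z => hmul Q P z ▸ forall_swapGlue hcQ hcP z)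
    (forall_swapGlue hP hQ) (forall_swapGlue hQ hP)
  refine ⟨Ψ, hΨ, fun y hy => ?_⟩
  obtain ⟨hXy, hTy, dΨ₁, dΨ₂⟩ := hinv y
  have hmono : StrictMono fun b => swapGlue T (fun z => -T z) ((Ψ y).1, b) :=
    strictMono_of_deriv_pos fun b => by
      rw [(hasDerivAt_snd_of_linForm (hT' _)).deriv]
      exact hδ.trans_le (forall_swapGlue hQ hP _)
  have hdiag : swapGlue T (fun z => -T z) ((Ψ y).1, (Ψ y).1) = 0 :=
    (swapGlue_of_le le_rfl).trans (hT₀ _)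
  have hle : (Ψ y).1 ≤ (Ψ y).2 := hmono.le_iff_le.1 <| by
    simpa only [hdiag, Prod.mk.eta, hTy] using hy
  have heq : y.2 = 0 → (Ψ y).1 = (Ψ y).2 := fun hy₀ => hmono.injective <| by
    simp only [hdiag, Prod.mk.eta, hTy, hy₀]
  simp only [swapGlue_of_le hle] at hXy hTy dΨ₁ dΨ₂
  exact ⟨hle, heq, hXy, hTy, dΨ₁, dΨ₂⟩

end HalfPlaneInversion

section CharacteristicCoordinates

variable {p q c V W : ℝ × ℝ → ℝ} {c₁ c₂ : ℝ} {z : ℝ × ℝ}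

/-- `c` is a positive propagation speed in characteristic coordinates with logarithmic derivatives
`∂_a log c = 2 p` and `∂_b log c = -2 q`. -/
structure IsCharacteristicSpeed (p q c : ℝ × ℝ → ℝ) : Prop where
  pos : ∀ z, 0 < c z
  continuous : Continuous c
  hasDerivAt_fst : ∀ a b, HasDerivAt (fun x => c (x, b)) (2 * p (a, b) * c (a, b)) a
  hasDerivAt_snd : ∀ a b, HasDerivAt (fun y => c (a, y)) (-(2 * q (a, b) * c (a, b))) b

namespace IsGoursatPair

variable (h : IsGoursatPair p q V W) (hc : IsCharacteristicSpeed p q c)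

include h hc

lemma hasDerivAt_left_div (a b : ℝ) : HasDerivAt (fun y => V (a, y) / (2 * c (a, y)))
    ((p (a, b) * W (a, b) + q (a, b) * V (a, b)) / (2 * c (a, b))) b := by
  have hcz := hc.pos (a, b)
  refine ((h.hasDerivAt_left a b).div ((hc.hasDerivAt_snd a b).const_mul 2)
    (by positivity)).congr_deriv ?_
  field_simp
  ring

lemma hasDerivAt_right_div (a b : ℝ) : HasDerivAt (fun x => W (x, b) / (2 * c (x, b)))
    (-((p (a, b) * W (a, b) + q (a, b) * V (a, b)) / (2 * c (a, b)))) a := by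
  have hcz := hc.pos (a, b)
  refine ((h.hasDerivAt_right a b).div ((hc.hasDerivAt_fst a b).const_mul 2)
    (by positivity)).congr_deriv ?_
  field_simp
  ring

end IsGoursatPair

lemma le_of_hasDerivAt_nonneg {f f' : ℝ → ℝ} {a b : ℝ} (hab : a ≤ b)
    (hf : ∀ x, HasDerivAt f (f' x) x) (hf' : ∀ x ∈ Icc a b, 0 ≤ f' x) : f a ≤ f b := by
  refine monotoneOn_of_deriv_nonneg (convex_Icc a b)
    (fun x _ => (hf x).continuousAt.continuousWithinAt)
    (fun x _ => (hf x).differentiableAt.differentiableWithinAt) (fun x hx => ?_)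
    (left_mem_Icc.2 hab) (right_mem_Icc.2 hab) hab
  exact (hf x).deriv ▸ hf' x (interior_subset hx)

/-- `∂_b (V / 2c)` and `-∂_a (W / 2c)` both equal `(p W + q V) / 2c ≥ 0`. -/
theorem IsGoursatSolution.inv_le_div (h : IsGoursatSolution p q V W)
    (hc : IsCharacteristicSpeed p q c) (hcu : ∀ z, c z ≤ c₂) (hpc : Continuous p)
    (hqc : Continuous q) (hp : ∀ z, 0 ≤ p z) (hq : ∀ z, 0 ≤ q z) (hz : z.1 ≤ z.2) :
    (2 * c₂)⁻¹ ≤ V z / (2 * c z) ∧ (2 * c₂)⁻¹ ≤ W z / (2 * c z) := by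
  have hinv : ∀ w, (2 * c₂)⁻¹ ≤ 1 / (2 * c w) := fun w => by
    have hcw := hc.pos w
    rw [one_div]
    gcongr
    exact hcu w
  have hmixed : ∀ w : ℝ × ℝ, w.1 ≤ w.2 → 0 ≤ (p w * W w + q w * V w) / (2 * c w) := fun w hw => by
    have hcw := hc.pos w
    obtain ⟨hV, hW⟩ := h.nonneg hpc hqc (fun z _ => hp z) (fun z _ => hq z)
      (fun a => (h.left_diag a).symm ▸ zero_le_one)
      (fun a => (h.right_diag a).symm ▸ zero_le_one) hw
    have hpw := hp w
    have hqw := hq w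
    positivity
  obtain ⟨a, b⟩ := z
  constructor
  · have hmono := le_of_hasDerivAt_nonneg hz (fun y => h.hasDerivAt_left_div hc a y)
      fun y hy => hmixed (a, y) hy.1
    rw [h.left_diag] at hmono
    exact (hinv _).trans hmono
  · have hmono := le_of_hasDerivAt_nonneg hz (fun x => (h.hasDerivAt_right_div hc x b).neg)
      fun x hx => by simpa only [neg_neg] using hmixed (x, b) hx.2
    simp only [Pi.neg_apply, h.right_diag, neg_le_neg_iff] at hmono
    exact (hinv _).trans hmono

lemma IsGoursatSolution.pos (h : IsGoursatSolution p q V W) (hc : IsCharacteristicSpeed p q c)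
    (hcu : ∀ z, c z ≤ c₂) (hpc : Continuous p) (hqc : Continuous q) (hp : ∀ z, 0 ≤ p z)
    (hq : ∀ z, 0 ≤ q z) (hz : z.1 ≤ z.2) : 0 < V z ∧ 0 < W z := by
  have hcz : 0 < 2 * c z := mul_pos two_pos (hc.pos z)
  have hinv : 0 < (2 * c₂)⁻¹ := inv_pos.2 (mul_pos two_pos ((hc.pos z).trans_le (hcu z)))
  obtain ⟨hV, hW⟩ := h.inv_le_div hc hcu hpc hqc hp hq hz
  exact ⟨(div_pos_iff_of_pos_right hcz).1 (hinv.trans_le hV),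
    (div_pos_iff_of_pos_right hcz).1 (hinv.trans_le hW)⟩

lemma apply_diag_of_hasFDerivAt_linForm {F A B : ℝ × ℝ → ℝ} {m : ℝ}
    (hF : ∀ z, HasFDerivAt F (linForm (A z) (B z)) z) (hF₀ : F 0 = 0)
    (hm : ∀ a, A (a, a) + B (a, a) = m) (a : ℝ) : F (a, a) = m * a := by
  have hdiag : ∀ y, HasDerivAt (fun y => F (y, y) - m * y) 0 y := fun y => by
    refine ((HasFDerivAt.comp_hasDerivAt (f := fun y : ℝ => (y, y)) y (hF (y, y))
      ((hasDerivAt_id y).prodMk (hasDerivAt_id y))).sub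
      ((hasDerivAt_id y).const_mul m)).congr_deriv ?_
    simp [hm]
  have hconst := is_const_of_deriv_eq_zero (fun y => (hdiag y).differentiableAt)
    (fun y => (hdiag y).deriv) a 0
  simpa [show ((0 : ℝ), (0 : ℝ)) = 0 from rfl, hF₀, sub_eq_zero] using hconst

/-- `Ψ (x, t) = (a, b)` are the feet on `{t = 0}` of the two characteristics, of speeds `c` and
`-c`, through `(x, t)`. The functions `V` and `W` measure the spreading of the two families:
`∂_x a = 1 / V` and `∂_x b = 1 / W`. -/
structure IsCharacteristicFeet (c V W : ℝ × ℝ → ℝ) (Ψ : ℝ × ℝ → ℝ × ℝ) : Prop where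
  contDiff : ContDiff ℝ 1 Ψ
  apply_zero : ∀ x, Ψ (x, 0) = (x, x)
  fst_le_snd : ∀ y, 0 ≤ y.2 → (Ψ y).1 ≤ (Ψ y).2
  hasFDerivAt_fst : ∀ y, 0 ≤ y.2 →
    HasFDerivAt (fun y => (Ψ y).1) (linForm (V (Ψ y))⁻¹ (-(c (Ψ y) * (V (Ψ y))⁻¹))) y
  hasFDerivAt_snd : ∀ y, 0 ≤ y.2 →
    HasFDerivAt (fun y => (Ψ y).2) (linForm (W (Ψ y))⁻¹ (c (Ψ y) * (W (Ψ y))⁻¹)) y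

/-- `X` and `T` integrate the closed forms `(V da + W db) / 2` and `(-V da + W db) / 2c`. -/
lemma IsGoursatSolution.exists_characteristicMap (h : IsGoursatSolution p q V W)
    (hc : IsCharacteristicSpeed p q c) (hpc : Continuous p) (hqc : Continuous q) :
    ∃ X T : ℝ × ℝ → ℝ, (∀ z, HasFDerivAt X (linForm (V z / 2) (W z / 2)) z) ∧
      (∀ z, HasFDerivAt T (linForm (-(V z / (2 * c z))) (W z / (2 * c z))) z) ∧
      (∀ a, X (a, a) = a) ∧ ∀ a, T (a, a) = 0 := by
  have hcc := hc.continuous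
  have hVc := h.continuous_left
  have hWc := h.continuous_right
  have h2c : ∀ z, 2 * c z ≠ 0 := fun z => (mul_pos two_pos (hc.pos z)).ne'
  obtain ⟨X, hX₀, hX⟩ := exists_hasFDerivAt_linForm (V := fun z => V z / 2) (W := fun z => W z / 2)
    (g := fun z => (p z * W z - q z * V z) / 2) (by fun_prop) (by fun_prop) (by fun_prop)
    (fun a b => (h.hasDerivAt_left a b).div_const 2)
    (fun a b => (h.hasDerivAt_right a b).div_const 2)
  obtain ⟨T, hT₀, hT⟩ := exists_hasFDerivAt_linForm (V := fun z => -(V z / (2 * c z)))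
    (W := fun z => W z / (2 * c z)) (g := fun z => -((p z * W z + q z * V z) / (2 * c z)))
    (by fun_prop (disch := exact h2c _)) (by fun_prop (disch := exact h2c _))
    (by fun_prop (disch := exact h2c _)) (fun a b => (h.hasDerivAt_left_div hc a b).neg)
    (fun a b => h.hasDerivAt_right_div hc a b)
  have hXdiag := apply_diag_of_hasFDerivAt_linForm (m := 1) hX hX₀ fun a => by
    rw [h.left_diag, h.right_diag, add_halves]
  have hTdiag := apply_diag_of_hasFDerivAt_linForm (m := 0) hT hT₀ fun a => by
    rw [h.left_diag, h.right_diag, neg_add_cancel]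
  exact ⟨X, T, hX, hT, fun a => (hXdiag a).trans (one_mul a),
    fun a => (hTdiag a).trans (zero_mul a)⟩

theorem IsGoursatSolution.exists_isCharacteristicFeet (h : IsGoursatSolution p q V W)
    (hc : IsCharacteristicSpeed p q c) (hc₁ : 0 < c₁) (hcl : ∀ z, c₁ ≤ c z) (hcu : ∀ z, c z ≤ c₂)
    (hpc : Continuous p) (hqc : Continuous q) (hp : ∀ z, 0 ≤ p z) (hq : ∀ z, 0 ≤ q z) :
    ∃ Ψ, IsCharacteristicFeet c V W Ψ := by
  have hc₂ : 0 < c₂ := hc₁.trans_le ((hcl 0).trans (hcu 0))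
  have h2c : ∀ z, 2 * c z ≠ 0 := fun z => (mul_pos two_pos (hc.pos z)).ne'
  have hspeed : ∀ z y, c z * (y / (2 * c z)) = y / 2 := fun z y => by
    have hcz := (hc.pos z).ne'
    field_simp
  have hbound : ∀ z y, (2 * c₂)⁻¹ ≤ y / (2 * c z) →
      min 1 c₁ * (2 * c₂)⁻¹ ≤ y / (2 * c z) ∧
        min 1 c₁ * (2 * c₂)⁻¹ ≤ c z * (y / (2 * c z)) := fun z y hy => by
    have hinv : 0 ≤ (2 * c₂)⁻¹ := by positivity
    exact ⟨(mul_le_of_le_one_left hinv (min_le_left _ _)).trans hy,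
      mul_le_mul ((min_le_right _ _).trans (hcl z)) hy hinv (hc.pos z).le⟩
  have hV := fun z hz => hbound z (V z) (h.inv_le_div hc hcu hpc hqc hp hq hz).1
  have hW := fun z hz => hbound z (W z) (h.inv_le_div hc hcu hpc hqc hp hq hz).2
  obtain ⟨X, T, hX, hT, hXdiag, hTdiag⟩ := h.exists_characteristicMap hc hpc hqc
  have hX' : ∀ z, HasFDerivAt X
      (linForm (c z * (V z / (2 * c z))) (c z * (W z / (2 * c z)))) z := fun z => by
    simpa only [hspeed] using hX z
  have hcoef : ∀ z y, (2 * c z * (y / (2 * c z)))⁻¹ = y⁻¹ ∧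
      (2 * (y / (2 * c z)))⁻¹ = c z * y⁻¹ := fun z y => by
    have hcz := (hc.pos z).ne'
    constructor <;> field_simp
  obtain ⟨Ψ, hΨ, hinv⟩ := exists_inverse_of_characteristic_halfPlane (δ := min 1 c₁ * (2 * c₂)⁻¹)
    (by positivity) hX' hT hc.continuous
    (h.continuous_left.div (hc.continuous.const_mul 2) h2c)
    (h.continuous_right.div (hc.continuous.const_mul 2) h2c)
    (fun z hz => (hV z hz).2) (fun z hz => (hW z hz).2)
    (fun z hz => (hV z hz).1) (fun z hz => (hW z hz).1)
    (fun a => by rw [h.left_diag, h.right_diag]) hTdiag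
  simp only [hcoef] at hinv
  refine ⟨Ψ, hΨ, fun x => ?_, fun y hy => (hinv y hy).1, fun y hy => (hinv y hy).2.2.2.2.1,
    fun y hy => (hinv y hy).2.2.2.2.2⟩
  obtain ⟨-, hdiag, hXx, -⟩ := hinv (x, 0) le_rfl
  have hΨx : Ψ (x, 0) = ((Ψ (x, 0)).1, (Ψ (x, 0)).1) := Prod.ext rfl (hdiag rfl).symm
  rw [hΨx, hXdiag] at hXx
  rw [hΨx, hXx]

end CharacteristicCoordinates

section RiemannExistence

variable {p q c V W : ℝ × ℝ → ℝ} {z : ℝ × ℝ} {C k s₀ r₀ : ℝ → ℝ} {c₁ c₂ B M : ℝ}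

/-- If `p = m σ(a)` and `q = m ρ(b)`, then `(σ(a), ρ(b))` is itself a Goursat pair. -/
lemma IsGoursatPair.const_mul_sub {m : ℝ × ℝ → ℝ} {σ ρ : ℝ → ℝ} (h : IsGoursatPair p q V W)
    (hp : ∀ z, p z = m z * σ z.1) (hq : ∀ z, q z = m z * ρ z.2) (hσ : Continuous σ)
    (hρ : Continuous ρ) (M : ℝ) :
    IsGoursatPair p q (fun z => M * V z - σ z.1) (fun z => M * W z - ρ z.2) where
  continuous_left := (h.continuous_left.const_mul M).sub (hσ.comp continuous_fst)
  continuous_right := (h.continuous_right.const_mul M).sub (hρ.comp continuous_snd)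
  hasDerivAt_left a b := by
    refine (((h.hasDerivAt_left a b).const_mul M).sub_const (σ a)).congr_deriv ?_
    simp only [hp, hq]
    ring
  hasDerivAt_right a b := by
    refine (((h.hasDerivAt_right a b).const_mul M).sub_const (ρ b)).congr_deriv ?_
    simp only [hp, hq]
    ring

lemma IsGoursatSolution.le_mul {m : ℝ × ℝ → ℝ} {σ ρ : ℝ → ℝ} (h : IsGoursatSolution p q V W)
    (hp : ∀ z, p z = m z * σ z.1) (hq : ∀ z, q z = m z * ρ z.2) (hm : Continuous m)
    (hσ : Continuous σ) (hρ : Continuous ρ) (hm₀ : ∀ z, 0 ≤ m z) (hσ₀ : ∀ x, 0 ≤ σ x)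
    (hρ₀ : ∀ x, 0 ≤ ρ x) (hσM : ∀ x, σ x ≤ M) (hρM : ∀ x, ρ x ≤ M) (hz : z.1 ≤ z.2) :
    σ z.1 ≤ M * V z ∧ ρ z.2 ≤ M * W z := by
  have hpc : Continuous p := by
    rw [funext hp]
    fun_prop
  have hqc : Continuous q := by
    rw [funext hq]
    fun_prop
  have hsub := (h.const_mul_sub hp hq hσ hρ M).nonneg hpc hqc
    (fun z _ => hp z ▸ mul_nonneg (hm₀ z) (hσ₀ _)) (fun z _ => hq z ▸ mul_nonneg (hm₀ z) (hρ₀ _))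
    (fun a => by simpa [h.left_diag] using hσM a) (fun a => by simpa [h.right_diag] using hρM a) hz
  exact hsub.imp sub_nonneg.1 sub_nonneg.1

lemma isCharacteristicSpeed_comp_sub (hC : ∀ y, HasDerivAt C (4 * k y * C y) y)
    (hs : ContDiff ℝ 1 s₀) (hr : ContDiff ℝ 1 r₀) (hpos : ∀ a b, 0 < C ((s₀ a - r₀ b) / 2)) :
    IsCharacteristicSpeed (fun z => k ((s₀ z.1 - r₀ z.2) / 2) * deriv s₀ z.1)
      (fun z => k ((s₀ z.1 - r₀ z.2) / 2) * deriv r₀ z.2) (fun z => C ((s₀ z.1 - r₀ z.2) / 2)) where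
  pos z := hpos z.1 z.2
  continuous := by
    have hCc : Continuous C := continuous_iff_continuousAt.2 fun y => (hC y).continuousAt
    have hsc := hs.continuous
    have hrc := hr.continuous
    fun_prop
  hasDerivAt_fst a b := by
    have hsa := (hs.differentiable one_ne_zero a).hasDerivAt
    exact ((hC _).comp a ((hsa.sub_const (r₀ b)).div_const 2)).congr_deriv (by ring)
  hasDerivAt_snd a b := by
    have hrb := (hr.differentiable one_ne_zero b).hasDerivAt
    exact ((hC _).comp b ((hrb.const_sub (s₀ a)).div_const 2)).congr_deriv (by ring)

/-- `s` and `r` are transported along the characteristics: `s = s₀(a)` and `r = r₀(b)`, where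
`(a, b)` are the feet. -/
theorem exists_riemannSolution (hC : ∀ y, HasDerivAt C (4 * k y * C y) y) (hkc : Continuous k)
    (hk : ∀ y, 0 ≤ k y) (hkB : ∀ y, k y ≤ B) (hs : ContDiff ℝ 1 s₀) (hr : ContDiff ℝ 1 r₀)
    (hs' : ∀ x, 0 ≤ deriv s₀ x) (hr' : ∀ x, 0 ≤ deriv r₀ x) (hsM : ∀ x, deriv s₀ x ≤ M)
    (hrM : ∀ x, deriv r₀ x ≤ M) (hc₁ : 0 < c₁) (hcl : ∀ a b, c₁ ≤ C ((s₀ a - r₀ b) / 2))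
    (hcu : ∀ a b, C ((s₀ a - r₀ b) / 2) ≤ c₂) :
    ∃ s r : ℝ × ℝ → ℝ, ContDiff ℝ 1 s ∧ ContDiff ℝ 1 r ∧
      (∀ x, s (x, 0) = s₀ x) ∧ (∀ x, r (x, 0) = r₀ x) ∧
      ∀ y, 0 ≤ y.2 → C ((s y - r y) / 2) ≤ c₂ ∧ ∃ sx ≤ M, ∃ rx ≤ M,
        HasFDerivAt s (linForm sx (-(C ((s y - r y) / 2) * sx))) y ∧
        HasFDerivAt r (linForm rx (C ((s y - r y) / 2) * rx)) y := by
  have hsc := hs.continuous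
  have hrc := hr.continuous
  have hs'c := hs.continuous_deriv le_rfl
  have hr'c := hr.continuous_deriv le_rfl
  have hbound : ∀ y x, 0 ≤ x → x ≤ M → |k y * x| ≤ B * M := fun y x hx hxM => by
    rw [abs_of_nonneg (mul_nonneg (hk y) hx)]
    exact mul_le_mul (hkB y) hxM hx ((hk y).trans (hkB y))
  have hspeed := isCharacteristicSpeed_comp_sub hC hs hr fun a b => hc₁.trans_le (hcl a b)
  obtain ⟨V, W, hVW⟩ := exists_isGoursatSolution (B := B * M)
    (p := fun z => k ((s₀ z.1 - r₀ z.2) / 2) * deriv s₀ z.1)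
    (q := fun z => k ((s₀ z.1 - r₀ z.2) / 2) * deriv r₀ z.2) (by fun_prop) (by fun_prop)
    (fun z => hbound _ _ (hs' _) (hsM _)) (fun z => hbound _ _ (hr' _) (hrM _))
  have hp : ∀ z : ℝ × ℝ, 0 ≤ k ((s₀ z.1 - r₀ z.2) / 2) * deriv s₀ z.1 := fun z =>
    mul_nonneg (hk _) (hs' _)
  have hq : ∀ z : ℝ × ℝ, 0 ≤ k ((s₀ z.1 - r₀ z.2) / 2) * deriv r₀ z.2 := fun z =>
    mul_nonneg (hk _) (hr' _)
  obtain ⟨Ψ, hΨ⟩ := hVW.exists_isCharacteristicFeet hspeed hc₁ (fun z => hcl z.1 z.2)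
    (fun z => hcu z.1 z.2) (by fun_prop) (by fun_prop) hp hq
  refine ⟨fun y => s₀ (Ψ y).1, fun y => r₀ (Ψ y).2, hs.comp hΨ.contDiff.fst,
    hr.comp hΨ.contDiff.snd, fun x => by simp only [hΨ.apply_zero],
    fun x => by simp only [hΨ.apply_zero], fun y hy => ?_⟩
  have hfeet := hΨ.fst_le_snd y hy
  obtain ⟨hV, hW⟩ := hVW.pos hspeed (fun z => hcu z.1 z.2) (by fun_prop) (by fun_prop) hp hq hfeet
  obtain ⟨hsV, hrW⟩ := hVW.le_mul (fun z => rfl) (fun z => rfl) (by fun_prop) hs'c hr'c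
    (fun z => hk _) hs' hr' hsM hrM hfeet
  refine ⟨hcu _ _, deriv s₀ (Ψ y).1 * (V (Ψ y))⁻¹, ?_, deriv r₀ (Ψ y).2 * (W (Ψ y))⁻¹, ?_, ?_, ?_⟩
  · rwa [← div_eq_mul_inv, div_le_iff₀ hV]
  · rwa [← div_eq_mul_inv, div_le_iff₀ hW]
  · exact (hasFDerivAt_linForm_comp (hΨ.hasFDerivAt_fst y hy)
      (hs.differentiable one_ne_zero _).hasDerivAt).congr_fderiv (by congr 1; ring)
  · exact (hasFDerivAt_linForm_comp (hΨ.hasFDerivAt_snd y hy)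
      (hr.differentiable one_ne_zero _).hasDerivAt).congr_fderiv (by congr 1; ring)

end RiemannExistence

section DomainOfDependence

variable {x₀ t₁ L d : ℝ} {z : ℝ × ℝ}

/-- The backward triangle with apex `(x₀, t₁)` that is bounded by `{t = 0}` and by the lines of
speed `±L`: a domain of dependence for propagation speeds at most `L`. -/
def dependenceTriangle (x₀ t₁ L : ℝ) : Set (ℝ × ℝ) :=
  {z | 0 ≤ z.2 ∧ z.2 ≤ t₁ ∧ |z.1 - x₀| ≤ L * (t₁ - z.2)}

lemma apex_mem_dependenceTriangle (ht₁ : 0 ≤ t₁) : (x₀, t₁) ∈ dependenceTriangle x₀ t₁ L :=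
  ⟨ht₁, le_rfl, by simp⟩

lemma dependenceTriangle_subset_strip {T : ℝ} (ht₁ : t₁ < T) :
    dependenceTriangle x₀ t₁ L ⊆ univ ×ˢ Ico 0 T :=
  fun _ hz => ⟨trivial, hz.1, hz.2.1.trans_lt ht₁⟩

lemma isCompact_dependenceTriangle (x₀ t₁ : ℝ) (hL : 0 ≤ L) :
    IsCompact (dependenceTriangle x₀ t₁ L) := by
  have hclosed : IsClosed (dependenceTriangle x₀ t₁ L) := by
    have hcone : IsClosed {z : ℝ × ℝ | |z.1 - x₀| ≤ L * (t₁ - z.2)} :=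
      isClosed_le (by fun_prop) (by fun_prop)
    exact (isClosed_le continuous_const continuous_snd).inter
      ((isClosed_le continuous_snd continuous_const).inter hcone)
  refine ((isCompact_Icc (a := x₀ - L * t₁) (b := x₀ + L * t₁)).prod
    (isCompact_Icc (a := 0) (b := t₁))).of_isClosed_subset hclosed ?_
  rintro ⟨x, t⟩ ⟨ht, htt₁, hx⟩
  have hLt : 0 ≤ L * t := mul_nonneg hL ht
  rw [abs_le] at hx
  exact ⟨⟨by linarith, by linarith⟩, ht, htt₁⟩

lemma convex_dependenceTriangle (x₀ t₁ L : ℝ) : Convex ℝ (dependenceTriangle x₀ t₁ L) := by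
  rintro ⟨x, t⟩ ⟨ht, htt₁, hx⟩ ⟨y, s⟩ ⟨hs, hst₁, hy⟩ a b ha hb hab
  obtain rfl : b = 1 - a := by linarith
  simp only [dependenceTriangle, abs_le, mem_ofPred_eq, Prod.smul_mk, Prod.mk_add_mk,
    smul_eq_mul] at *
  refine ⟨by positivity, by nlinarith, by nlinarith, by nlinarith⟩

/-- Following a line of speed `d` backwards in time, one stays in the triangle down to `t = 0`. -/
lemma foot_mem_dependenceTriangle (hz : z ∈ dependenceTriangle x₀ t₁ L) (hd : |d| ≤ L) :
    (z.1 - z.2 * d, 0) ∈ dependenceTriangle x₀ t₁ L := by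
  obtain ⟨ht, htt₁, hx⟩ := hz
  refine ⟨le_rfl, ht.trans htt₁, ?_⟩
  calc |z.1 - z.2 * d - x₀| = |(z.1 - x₀) - z.2 * d| := by rw [sub_right_comm]
    _ ≤ |z.1 - x₀| + |z.2 * d| := abs_sub _ _
    _ ≤ L * (t₁ - z.2) + z.2 * L := by
      rw [abs_mul, abs_of_nonneg ht]
      gcongr
    _ = L * (t₁ - 0) := by ring

end DomainOfDependence

section TransportUniqueness

variable {ι : Type*} [Finite ι] {w : ι → ℝ × ℝ → ℝ} {x₀ t₁ L N : ℝ}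

lemma hasFDerivAt_sub_exp {f : ℝ × ℝ → ℝ} {a b : ℝ} {z : ℝ × ℝ}
    (hf : HasFDerivAt f (linForm a b) z) (σ ε κ : ℝ) :
    HasFDerivAt (fun z => σ * f z - ε * exp (κ * z.2))
      (linForm (σ * a) (σ * b - κ * (ε * exp (κ * z.2)))) z :=
  ((hf.const_mul σ).sub ((hasFDerivAt_snd.const_mul κ).exp.const_mul ε)).congr_fderiv
    (clm_prod_ext (by simp) (by simp only [sub_apply, smul_apply, linForm_apply, smul_eq_mul,
      ContinuousLinearMap.coe_snd']; ring))

/-- The maximum principle is applied to `±w i - ε e^{(N + 1) t}`. -/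
theorem eq_zero_of_transport_le (hL : 0 ≤ L)
    (hw : ∀ i, ContinuousOn (w i) (dependenceTriangle x₀ t₁ L)) (hw₀ : ∀ i x, w i (x, 0) = 0)
    (htransport : ∀ z ∈ dependenceTriangle x₀ t₁ L, 0 < z.2 → ∀ B, (∀ j, |w j z| ≤ B) →
      ∀ i, ∃ a b d, |d| ≤ L ∧ HasFDerivAt (w i) (linForm a b) z ∧ |b + d * a| ≤ N * B) :
    ∀ i, ∀ z ∈ dependenceTriangle x₀ t₁ L, w i z = 0 := by
  have hbarrier : ∀ ε > 0, ∀ i : ι × ({1, -1} : Set ℝ), ∀ z ∈ dependenceTriangle x₀ t₁ L,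
      i.2 * w i.1 z - ε * exp ((N + 1) * z.2) < 0 := fun ε hε => by
    have hinit : ∀ (i : ι × ({1, -1} : Set ℝ)) (z : ℝ × ℝ), z.2 = 0 →
        i.2 * w i.1 z - ε * exp ((N + 1) * z.2) < 0 := by
      rintro i ⟨x, t⟩ (rfl : t = 0)
      simpa [hw₀] using hε
    refine forall_neg_of_hasLineDerivAt_pos (isCompact_dependenceTriangle x₀ t₁ hL)
      (convex_dependenceTriangle x₀ t₁ L) (ContinuousLinearMap.snd ℝ ℝ ℝ) (fun i => ?_)
      (fun z hz hmin i => ?_) fun z hz hnonpos i hi => ?_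
    · have hwi := hw i.1
      fun_prop
    · refine hinit i z (le_antisymm ?_ hz.1)
      simpa using hmin (z.1 - z.2 * 0, 0) (foot_mem_dependenceTriangle hz (by simpa using hL))
    have ht : 0 < z.2 := hz.1.lt_of_ne fun h => (hinit i z h.symm).ne hi
    have hwz : ∀ j, |w j z| ≤ ε * exp ((N + 1) * z.2) := fun j => by
      have hplus := hnonpos (j, ⟨1, by simp⟩)
      have hminus := hnonpos (j, ⟨-1, by simp⟩)
      exact abs_le.2 ⟨by linarith, by linarith⟩
    obtain ⟨a, b, d, hd, hF, hab⟩ := htransport z hz ht _ hwz i.1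
    refine ⟨_, foot_mem_dependenceTriangle hz hd, ht, _, HasFDerivAt.hasLineDerivAt
      (hasFDerivAt_sub_exp hF i.2 ε (N + 1)) _, ?_⟩
    have hsign : (i.2 : ℝ) * (b + d * a) ≤ |b + d * a| := by
      rcases i.2.2 with h | h
      · rw [h, one_mul]
        exact le_abs_self _
      · rw [h, neg_one_mul]
        exact neg_le_abs _
    have hexp := mul_pos ht (mul_pos hε (exp_pos ((N + 1) * z.2)))
    simp only [linForm_apply, Prod.fst_sub, Prod.snd_sub]
    nlinarith [mul_le_mul_of_nonneg_left (hsign.trans hab) ht.le]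
  intro i z hz
  refine abs_nonpos_iff.1 (le_of_forall_pos_le_add fun δ hδ => ?_)
  have hexp : δ * exp (-((N + 1) * z.2)) * exp ((N + 1) * z.2) = δ := by
    rw [mul_assoc, ← exp_add, neg_add_cancel, exp_zero, mul_one]
  have hplus := hbarrier _ (mul_pos hδ (exp_pos (-((N + 1) * z.2)))) (i, ⟨1, by simp⟩) z hz
  have hminus := hbarrier _ (mul_pos hδ (exp_pos (-((N + 1) * z.2)))) (i, ⟨-1, by simp⟩) z hz
  rw [hexp] at hplus hminus
  exact abs_le.2 ⟨by linarith, by linarith⟩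

end TransportUniqueness

section RiemannUniqueness

variable {C : ℝ → ℝ} {T L : ℝ} {s r sx rx s' r' sx' rx' : ℝ × ℝ → ℝ}

/-- `s` and `r`, with continuous `x`-derivatives `sx` and `rx`, solve `s_t + c s_x = 0`,
`r_t - c r_x = 0` on `ℝ × (0, T)`, where `c = C(η)` is a function of `η = (s - r) / 2 > 0`. -/
structure IsRiemannSolution (C : ℝ → ℝ) (T : ℝ) (s r sx rx : ℝ × ℝ → ℝ) : Prop where
  continuousOn_left : ContinuousOn s (univ ×ˢ Ico 0 T)
  continuousOn_right : ContinuousOn r (univ ×ˢ Ico 0 T)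
  continuousOn_left_deriv : ContinuousOn sx (univ ×ˢ Ico 0 T)
  continuousOn_right_deriv : ContinuousOn rx (univ ×ˢ Ico 0 T)
  pos : ∀ z ∈ univ ×ˢ Ico 0 T, 0 < (s z - r z) / 2
  hasFDerivAt_left : ∀ z : ℝ × ℝ, z.2 ∈ Ioo 0 T →
    HasFDerivAt s (linForm (sx z) (-(C ((s z - r z) / 2) * sx z))) z
  hasFDerivAt_right : ∀ z : ℝ × ℝ, z.2 ∈ Ioo 0 T →
    HasFDerivAt r (linForm (rx z) (C ((s z - r z) / 2) * rx z)) z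

namespace IsRiemannSolution

variable {K : Set (ℝ × ℝ)}

/-- The values of `η` on a compact set stay in a compact subset of `(0, ∞)`. -/
lemma exists_abs_speed_sub_le (hC : ContDiffOn ℝ 1 C (Ioi 0)) (h : IsRiemannSolution C T s r sx rx)
    (h' : IsRiemannSolution C T s' r' sx' rx') (hK : IsCompact K) (hKT : K ⊆ univ ×ˢ Ico 0 T) :
    ∃ Λ : NNReal, ∀ z ∈ K, ∀ B, |s z - s' z| ≤ B → |r z - r' z| ≤ B →
      |C ((s z - r z) / 2) - C ((s' z - r' z) / 2)| ≤ Λ * B := by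
  have hη : ContinuousOn (fun z => (s z - r z) / 2) K :=
    ((h.continuousOn_left.sub h.continuousOn_right).div_const 2).mono hKT
  have hη' : ContinuousOn (fun z => (s' z - r' z) / 2) K :=
    ((h'.continuousOn_left.sub h'.continuousOn_right).div_const 2).mono hKT
  have hsub : (fun z => (s z - r z) / 2) '' K ∪ (fun z => (s' z - r' z) / 2) '' K ⊆ Ioi 0 := by
    rintro _ (⟨z, hz, rfl⟩ | ⟨z, hz, rfl⟩)
    exacts [h.pos z (hKT hz), h'.pos z (hKT hz)]
  have hloc := (hC.locallyLipschitzOn (convex_Ioi 0)).mono hsub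
  obtain ⟨Λ, hΛ⟩ := hloc.exists_lipschitzOnWith_of_compact
    ((hK.image_of_continuousOn hη).union (hK.image_of_continuousOn hη'))
  refine ⟨Λ, fun z hz B hs hr => ?_⟩
  have hdist := hΛ.dist_le_mul _ (.inl (mem_image_of_mem _ hz)) _ (.inr (mem_image_of_mem _ hz))
  rw [dist_eq, dist_eq] at hdist
  refine hdist.trans (mul_le_mul_of_nonneg_left ?_ Λ.2)
  rw [abs_le] at *
  constructor <;> linarith

lemma exists_abs_speed_sub_mul_le (hC : ContDiffOn ℝ 1 C (Ioi 0))
    (h : IsRiemannSolution C T s r sx rx) (h' : IsRiemannSolution C T s' r' sx' rx')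
    (hK : IsCompact K) (hKT : K ⊆ univ ×ˢ Ico 0 T) :
    ∃ N, ∀ z ∈ K, ∀ B, |s z - s' z| ≤ B → |r z - r' z| ≤ B →
      |(C ((s z - r z) / 2) - C ((s' z - r' z) / 2)) * sx' z| ≤ N * B ∧
      |(C ((s z - r z) / 2) - C ((s' z - r' z) / 2)) * rx' z| ≤ N * B := by
  obtain ⟨Λ, hΛ⟩ := exists_abs_speed_sub_le hC h h' hK hKT
  obtain ⟨D, hD⟩ := hK.exists_bound_of_continuousOn (h'.continuousOn_left_deriv.mono hKT)
  obtain ⟨E, hE⟩ := hK.exists_bound_of_continuousOn (h'.continuousOn_right_deriv.mono hKT)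
  refine ⟨Λ * max D E, fun z hz B hs hr => ?_⟩
  have hcc := hΛ z hz B hs hr
  rw [abs_mul, abs_mul, mul_right_comm]
  exact ⟨mul_le_mul hcc ((hD z hz).trans (le_max_left D E)) (abs_nonneg _)
      ((abs_nonneg _).trans hcc),
    mul_le_mul hcc ((hE z hz).trans (le_max_right D E)) (abs_nonneg _) ((abs_nonneg _).trans hcc)⟩

/-- In the difference of the equations for `s` and `s'` the coefficient of the uncontrolled
derivative `s_x - s'_x` is the bounded speed of the first solution. -/
theorem eqOn (hC : ContDiffOn ℝ 1 C (Ioi 0)) (h : IsRiemannSolution C T s r sx rx)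
    (h' : IsRiemannSolution C T s' r' sx' rx')
    (hL : ∀ z ∈ univ ×ˢ Ico 0 T, |C ((s z - r z) / 2)| ≤ L)
    (hs₀ : ∀ x, s (x, 0) = s' (x, 0)) (hr₀ : ∀ x, r (x, 0) = r' (x, 0)) :
    EqOn s s' (univ ×ˢ Ico 0 T) ∧ EqOn r r' (univ ×ˢ Ico 0 T) := by
  let w : Fin 2 → ℝ × ℝ → ℝ := ![fun z => s z - s' z, fun z => r z - r' z]
  suffices hzero : ∀ z ∈ univ ×ˢ Ico 0 T, ∀ i, w i z = 0 from
    ⟨fun z hz => sub_eq_zero.1 (hzero z hz 0), fun z hz => sub_eq_zero.1 (hzero z hz 1)⟩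
  rintro ⟨x₀, t₁⟩ ⟨-, ht₁, ht₁T⟩ i
  have hL₀ : 0 ≤ L := (abs_nonneg _).trans (hL (x₀, t₁) ⟨trivial, ht₁, ht₁T⟩)
  have hKT := dependenceTriangle_subset_strip (x₀ := x₀) (L := L) ht₁T
  obtain ⟨N, hN⟩ :=
    exists_abs_speed_sub_mul_le hC h h' (isCompact_dependenceTriangle x₀ t₁ hL₀) hKT
  refine eq_zero_of_transport_le (N := N) hL₀ ?_ ?_ (fun z hz ht B hB => ?_) i _
    (apex_mem_dependenceTriangle ht₁)
  · rw [Fin.forall_fin_two]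
    exact ⟨(h.continuousOn_left.sub h'.continuousOn_left).mono hKT,
      (h.continuousOn_right.sub h'.continuousOn_right).mono hKT⟩
  · rw [Fin.forall_fin_two]
    exact ⟨fun x => sub_eq_zero.2 (hs₀ x), fun x => sub_eq_zero.2 (hr₀ x)⟩
  · rw [Fin.forall_fin_two] at hB ⊢
    have hzT : z.2 ∈ Ioo 0 T := ⟨ht, (hKT hz).2.2⟩
    have hc := hL z (hKT hz)
    obtain ⟨hleft, hright⟩ := hN z hz B hB.1 hB.2
    have hsub := (h.hasFDerivAt_left z hzT).sub (h'.hasFDerivAt_left z hzT)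
    have hsub' := (h.hasFDerivAt_right z hzT).sub (h'.hasFDerivAt_right z hzT)
    rw [linForm_sub] at hsub hsub'
    refine ⟨⟨_, _, C ((s z - r z) / 2), hc, hsub, ?_⟩, ⟨_, _, -C ((s z - r z) / 2), ?_, hsub', ?_⟩⟩
    · rw [← abs_neg] at hleft
      convert hleft using 2
      ring
    · rwa [abs_neg]
    · convert hright using 2
      ring

end IsRiemannSolution

end RiemannUniqueness

section GammaLaw

variable {K₁ γ τ η : ℝ}

/-- The specific volume as a function of `η`: the inverse `τ = K_τ η^{−2/(γ−1)}` of `etaP`. -/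
noncomputable def tauOfEta (K₁ γ η : ℝ) : ℝ :=
  KtauP K₁ γ * η ^ (-2 / (γ - 1))

/-- The sound speed as a function of `η`: `c = K_c η^{(γ+1)/(γ−1)}`. -/
noncomputable def speedOfEta (K₁ γ η : ℝ) : ℝ :=
  KcP K₁ γ * η ^ ((γ + 1) / (γ - 1))

lemma sqrt_mul_pos (hK : 0 < K₁) (hγ : 1 < γ) : 0 < √(K₁ * γ) :=
  Real.sqrt_pos.2 (mul_pos hK (by linarith))

lemma etaP_coeff_pos (hK : 0 < K₁) (hγ : 1 < γ) : 0 < 2 * √(K₁ * γ) / (γ - 1) :=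
  div_pos (mul_pos two_pos (sqrt_mul_pos hK hγ)) (by linarith)

lemma KtauP_pos (hK : 0 < K₁) (hγ : 1 < γ) : 0 < KtauP K₁ γ :=
  rpow_pos_of_pos (etaP_coeff_pos hK hγ) _

lemma etaP_pos (hK : 0 < K₁) (hγ : 1 < γ) (hτ : 0 < τ) : 0 < etaP K₁ γ τ :=
  mul_pos (etaP_coeff_pos hK hγ) (rpow_pos_of_pos hτ _)

lemma soundP_pos (hK : 0 < K₁) (hγ : 1 < γ) (hτ : 0 < τ) : 0 < soundP K₁ γ τ :=
  mul_pos (sqrt_mul_pos hK hγ) (rpow_pos_of_pos hτ _)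

lemma tauOfEta_pos (hK : 0 < K₁) (hγ : 1 < γ) (hη : 0 < η) : 0 < tauOfEta K₁ γ η :=
  mul_pos (KtauP_pos hK hγ) (rpow_pos_of_pos hη _)

lemma speedOfEta_pos (hK : 0 < K₁) (hγ : 1 < γ) (hη : 0 < η) : 0 < speedOfEta K₁ γ η :=
  mul_pos (mul_pos (sqrt_mul_pos hK hγ) (rpow_pos_of_pos (KtauP_pos hK hγ) _))
    (rpow_pos_of_pos hη _)

lemma etaP_tauOfEta (hK : 0 < K₁) (hγ : 1 < γ) (hη : 0 < η) : etaP K₁ γ (tauOfEta K₁ γ η) = η := by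
  have hγ' : γ - 1 ≠ 0 := by linarith
  have hcoeff := etaP_coeff_pos hK hγ
  rw [etaP, tauOfEta, mul_rpow (KtauP_pos hK hγ).le (rpow_nonneg hη.le _), KtauP,
    ← rpow_mul hcoeff.le, ← rpow_mul hη.le,
    show 2 / (γ - 1) * (-(γ - 1) / 2) = -1 by field_simp,
    show -2 / (γ - 1) * (-(γ - 1) / 2) = 1 by field_simp, rpow_one, rpow_neg_one,
    mul_inv_cancel_left₀ hcoeff.ne']

lemma tauOfEta_etaP (hK : 0 < K₁) (hγ : 1 < γ) (hτ : 0 < τ) : tauOfEta K₁ γ (etaP K₁ γ τ) = τ := by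
  have hγ' : γ - 1 ≠ 0 := by linarith
  have hcoeff := etaP_coeff_pos hK hγ
  rw [etaP, tauOfEta, mul_rpow hcoeff.le (rpow_nonneg hτ.le _), KtauP, ← rpow_mul hτ.le, neg_div,
    show -(γ - 1) / 2 * -(2 / (γ - 1)) = 1 by field_simp, rpow_one, rpow_neg hcoeff.le,
    mul_inv_cancel_left₀ (rpow_pos_of_pos hcoeff _).ne']

lemma soundP_tauOfEta (hK : 0 < K₁) (hγ : 1 < γ) (hη : 0 < η) :
    soundP K₁ γ (tauOfEta K₁ γ η) = speedOfEta K₁ γ η := by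
  have hγ' : γ - 1 ≠ 0 := by linarith
  rw [soundP, tauOfEta, mul_rpow (KtauP_pos hK hγ).le (rpow_nonneg hη.le _), ← rpow_mul hη.le,
    show -2 / (γ - 1) * (-(γ + 1) / 2) = (γ + 1) / (γ - 1) by field_simp, speedOfEta,
    KcP, mul_assoc]

lemma speedOfEta_etaP (hK : 0 < K₁) (hγ : 1 < γ) (hτ : 0 < τ) :
    speedOfEta K₁ γ (etaP K₁ γ τ) = soundP K₁ γ τ := by
  rw [← soundP_tauOfEta hK hγ (etaP_pos hK hγ hτ), tauOfEta_etaP hK hγ hτ]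

lemma hasDerivAt_etaP (hγ : γ ≠ 1) (hτ : τ ≠ 0) :
    HasDerivAt (etaP K₁ γ) (-soundP K₁ γ τ) τ := by
  have hγ' : γ - 1 ≠ 0 := sub_ne_zero.2 hγ
  refine ((Real.hasDerivAt_rpow_const (p := -(γ - 1) / 2) (.inl hτ)).const_mul
    (2 * √(K₁ * γ) / (γ - 1))).congr_deriv ?_
  rw [soundP, show -(γ - 1) / 2 - 1 = -(γ + 1) / 2 by ring]
  field_simp

lemma contDiffAt_tauOfEta {n : WithTop ℕ∞} (hη : η ≠ 0) : ContDiffAt ℝ n (tauOfEta K₁ γ) η :=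
  contDiffAt_const.mul (contDiffAt_rpow_const_of_ne hη)

lemma contDiffAt_speedOfEta {n : WithTop ℕ∞} (hη : η ≠ 0) : ContDiffAt ℝ n (speedOfEta K₁ γ) η :=
  contDiffAt_const.mul (contDiffAt_rpow_const_of_ne hη)

lemma hasDerivAt_tauOfEta (hK : 0 < K₁) (hγ : 1 < γ) (hη : 0 < η) :
    HasDerivAt (tauOfEta K₁ γ) (-(speedOfEta K₁ γ η)⁻¹) η := by
  rw [← soundP_tauOfEta hK hγ hη, ← inv_neg]
  have hτ := tauOfEta_pos hK hγ hη
  refine HasDerivAt.of_local_left_inverse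
    (contDiffAt_tauOfEta (n := 0) hη.ne').continuousAt (hasDerivAt_etaP hγ.ne' hτ.ne')
    (neg_ne_zero.2 (soundP_pos hK hγ hτ).ne') ?_
  exact (eventually_gt_nhds hη).mono fun y hy => etaP_tauOfEta hK hγ hy

lemma hasDerivAt_speedOfEta (hη : η ≠ 0) :
    HasDerivAt (speedOfEta K₁ γ) ((γ + 1) / (γ - 1) / η * speedOfEta K₁ γ η) η := by
  refine ((Real.hasDerivAt_rpow_const (p := (γ + 1) / (γ - 1)) (.inl hη)).const_mul
    (KcP K₁ γ)).congr_deriv ?_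
  rw [speedOfEta, rpow_sub_one hη]
  ring

lemma hasDerivAt_pressure (hK : 0 < K₁) (hγ : 1 < γ) (hτ : 0 < τ) :
    HasDerivAt (fun y => K₁ * y ^ (-γ)) (-soundP K₁ γ τ ^ 2) τ := by
  refine ((Real.hasDerivAt_rpow_const (p := -γ) (.inl hτ.ne')).const_mul K₁).congr_deriv ?_
  rw [soundP, mul_pow, sq_sqrt (mul_pos hK (by linarith)).le, ← rpow_mul_natCast hτ.le,
    show -(γ + 1) / 2 * (2 : ℕ) = -γ - 1 by push_cast; ring]
  ring

lemma antitoneOn_etaP (hK : 0 < K₁) (hγ : 1 < γ) : AntitoneOn (etaP K₁ γ) (Ioi 0) :=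
  fun _ ha _ _ hab => mul_le_mul_of_nonneg_left (rpow_le_rpow_of_nonpos ha hab (by linarith))
    (etaP_coeff_pos hK hγ).le

lemma antitoneOn_soundP (hγ : 1 < γ) : AntitoneOn (soundP K₁ γ) (Ioi 0) :=
  fun _ ha _ _ hab => mul_le_mul_of_nonneg_left (rpow_le_rpow_of_nonpos ha hab (by linarith))
    (sqrt_nonneg _)

end GammaLaw

section Conversion

variable {K₁ γ T L : ℝ} {I : Set ℝ} {τ u τ' u' : ℝ → ℝ → ℝ} {z : ℝ × ℝ}

/-- The spatial derivative of `f : ℝ × I → ℝ`, one-sided in time at an end point of `I`. -/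
noncomputable def stripDeriv (I : Set ℝ) (f : ℝ → ℝ → ℝ) (z : ℝ × ℝ) : ℝ :=
  fderivWithin ℝ (fun p : ℝ × ℝ => f p.1 p.2) (univ ×ˢ I) z (1, 0)

lemma continuousOn_stripDeriv {f : ℝ → ℝ → ℝ} (hI : UniqueDiffOn ℝ I)
    (hf : ContDiffOn ℝ 1 (fun p : ℝ × ℝ => f p.1 p.2) (univ ×ˢ I)) :
    ContinuousOn (stripDeriv I f) (univ ×ˢ I) :=
  (hf.continuousOn_fderivWithin (uniqueDiffOn_univ.prod hI) le_rfl).clm_apply continuousOn_const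

lemma hasFDerivAt_linForm_stripDeriv {f : ℝ → ℝ → ℝ} (hz : I ∈ 𝓝 z.2)
    (hf : ContDiffOn ℝ 1 (fun p : ℝ × ℝ => f p.1 p.2) (univ ×ˢ I)) :
    HasFDerivAt (fun p : ℝ × ℝ => f p.1 p.2)
      (linForm (stripDeriv I f z) (deriv (fun t => f z.1 t) z.2)) z := by
  have hI : univ ×ˢ I ∈ 𝓝 z := prod_mem_nhds univ_mem hz
  have hd := ((hf.contDiffAt hI).differentiableAt one_ne_zero).hasFDerivAt
  rw [eq_linForm (fderiv ℝ _ z)] at hd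
  rwa [(hasDerivAt_snd_of_linForm hd).deriv, stripDeriv, fderivWithin_of_mem_nhds hI]

namespace PSysSol

lemma deriv_pressure (hK : 0 < K₁) (hγ : 1 < γ) {f : ℝ × ℝ → ℝ} {a b : ℝ} (hf : 0 < f z)
    (hd : HasFDerivAt f (linForm a b) z) :
    deriv (fun x => K₁ * f (x, z.2) ^ (-γ)) z.1 = -soundP K₁ γ (f z) ^ 2 * a :=
  (HasDerivAt.comp z.1 (h₂ := fun y => K₁ * y ^ (-γ)) (h := fun x => f (x, z.2))
    (hasDerivAt_pressure hK hγ hf) (hasDerivAt_fst_of_linForm hd)).deriv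

lemma hasFDerivAt (hK : 0 < K₁) (hγ : 1 < γ) (h : PSysSol K₁ γ I 1 τ u) (hz : I ∈ 𝓝 z.2) :
    HasFDerivAt (fun p : ℝ × ℝ => τ p.1 p.2) (linForm (stripDeriv I τ z) (stripDeriv I u z)) z ∧
    HasFDerivAt (fun p : ℝ × ℝ => u p.1 p.2)
      (linForm (stripDeriv I u z) (soundP K₁ γ (τ z.1 z.2) ^ 2 * stripDeriv I τ z)) z := by
  obtain ⟨hpos, hτ, hu, hmass, hmomentum⟩ := h
  have hzI := mem_of_mem_nhds hz
  have dτ := hasFDerivAt_linForm_stripDeriv hz hτ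
  have du := hasFDerivAt_linForm_stripDeriv hz hu
  have hp := deriv_pressure hK hγ (hpos _ _ hzI) dτ
  have hux := (hasDerivAt_fst_of_linForm du).deriv
  have hτt := sub_eq_zero.1 (hmass z.1 z.2 hzI)
  have hut := eq_neg_of_add_eq_zero_left (hmomentum z.1 z.2 hzI)
  rw [hp, neg_mul, neg_neg] at hut
  rw [hux] at hτt
  exact ⟨hτt ▸ dτ, hut ▸ du⟩

lemma isRiemannSolution (hK : 0 < K₁) (hγ : 1 < γ) (h : PSysSol K₁ γ (Ico 0 T) 1 τ u) :
    IsRiemannSolution (speedOfEta K₁ γ) T (fun z => u z.1 z.2 + etaP K₁ γ (τ z.1 z.2))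
      (fun z => u z.1 z.2 - etaP K₁ γ (τ z.1 z.2))
      (fun z => stripDeriv (Ico 0 T) u z -
        soundP K₁ γ (τ z.1 z.2) * stripDeriv (Ico 0 T) τ z)
      (fun z => stripDeriv (Ico 0 T) u z +
        soundP K₁ γ (τ z.1 z.2) * stripDeriv (Ico 0 T) τ z) := by
  obtain ⟨hpos, hτ, hu, -⟩ := id h
  have hη : ContinuousOn (fun z : ℝ × ℝ => etaP K₁ γ (τ z.1 z.2)) (univ ×ˢ Ico 0 T) := fun z hz =>
    ContinuousAt.comp_continuousWithinAt (f := fun z : ℝ × ℝ => τ z.1 z.2)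
      (hasDerivAt_etaP hγ.ne' (hpos z.1 z.2 hz.2).ne').continuousAt (hτ.continuousOn z hz)
  have hsound : ContinuousOn (fun z : ℝ × ℝ => soundP K₁ γ (τ z.1 z.2)) (univ ×ˢ Ico 0 T) :=
    (hτ.continuousOn.rpow_const fun z hz => .inl (hpos z.1 z.2 hz.2).ne').const_mul _
  have hτx := hsound.mul (continuousOn_stripDeriv (uniqueDiffOn_Ico 0 T) hτ)
  have hux := continuousOn_stripDeriv (uniqueDiffOn_Ico 0 T) hu
  have hη_eq : ∀ v η : ℝ, (v + η - (v - η)) / 2 = η := fun v η => by ring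
  refine ⟨hu.continuousOn.add hη, hu.continuousOn.sub hη, hux.sub hτx, hux.add hτx, fun z hz => ?_,
    fun z hz => ?_, fun z hz => ?_⟩
  · rw [hη_eq]
    exact etaP_pos hK hγ (hpos _ _ hz.2)
  all_goals
    have hτz := hpos z.1 z.2 (Ioo_subset_Ico_self hz)
    obtain ⟨dτ, du⟩ := h.hasFDerivAt hK hγ (Ico_mem_nhds hz.1 hz.2)
    have dη := hasFDerivAt_linForm_comp dτ (hasDerivAt_etaP (K₁ := K₁) hγ.ne' hτz.ne')
    rw [hη_eq, speedOfEta_etaP hK hγ hτz]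
  · exact (du.add dη).congr_fderiv (clm_prod_ext
      (by simp only [add_apply, linForm_apply]; ring)
      (by simp only [add_apply, linForm_apply]; ring))
  · exact (du.sub dη).congr_fderiv (clm_prod_ext (by simp)
      (by simp only [sub_apply, linForm_apply]; ring))

/-- The bound on the sound speed of one of the two solutions makes the domains of dependence
compact. -/
theorem eq_of_soundP_le (hK : 0 < K₁) (hγ : 1 < γ) (h : PSysSol K₁ γ (Ico 0 T) 1 τ u)
    (h' : PSysSol K₁ γ (Ico 0 T) 1 τ' u') (hL : ∀ x, ∀ t ∈ Ico 0 T, soundP K₁ γ (τ x t) ≤ L)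
    (hτ₀ : ∀ x, τ x 0 = τ' x 0) (hu₀ : ∀ x, u x 0 = u' x 0) (x : ℝ) {t : ℝ} (ht : t ∈ Ico 0 T) :
    τ x t = τ' x t ∧ u x t = u' x t := by
  have hη_eq : ∀ v η : ℝ, (v + η - (v - η)) / 2 = η := fun v η => by ring
  have hC : ContDiffOn ℝ 1 (speedOfEta K₁ γ) (Ioi 0) := fun η hη =>
    (contDiffAt_speedOfEta (ne_of_gt hη)).contDiffWithinAt
  have hspeed : ∀ z ∈ univ ×ˢ Ico 0 T, |speedOfEta K₁ γ ((u z.1 z.2 + etaP K₁ γ (τ z.1 z.2) -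
      (u z.1 z.2 - etaP K₁ γ (τ z.1 z.2))) / 2)| ≤ L := fun z hz => by
    have hτz := h.1 z.1 z.2 hz.2
    rw [hη_eq, speedOfEta_etaP hK hγ hτz, abs_of_pos (soundP_pos hK hγ hτz)]
    exact hL z.1 z.2 hz.2
  obtain ⟨hs, hr⟩ := (h.isRiemannSolution hK hγ).eqOn hC (h'.isRiemannSolution hK hγ) hspeed
    (fun x => by simp only [hτ₀, hu₀]) (fun x => by simp only [hτ₀, hu₀])
  have hsx : u x t + _ = u' x t + _ := hs (x := (x, t)) ⟨trivial, ht⟩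
  have hrx : u x t - _ = u' x t - _ := hr (x := (x, t)) ⟨trivial, ht⟩
  have hη : etaP K₁ γ (τ x t) = etaP K₁ γ (τ' x t) := by linarith
  refine ⟨?_, by linarith⟩
  rw [← tauOfEta_etaP hK hγ (h.1 x t ht), hη, tauOfEta_etaP hK hγ (h'.1 x t ht)]

lemma hasFDerivAt_of_riemann (hK : 0 < K₁) (hγ : 1 < γ) {s r : ℝ × ℝ → ℝ} {sx rx : ℝ}
    (hη : 0 < (s z - r z) / 2)
    (ds : HasFDerivAt s (linForm sx (-(speedOfEta K₁ γ ((s z - r z) / 2) * sx))) z)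
    (dr : HasFDerivAt r (linForm rx (speedOfEta K₁ γ ((s z - r z) / 2) * rx)) z) :
    ∃ τx ux, HasFDerivAt (fun z => tauOfEta K₁ γ ((s z - r z) / 2)) (linForm τx ux) z ∧
      HasFDerivAt (fun z => (s z + r z) / 2)
        (linForm ux (speedOfEta K₁ γ ((s z - r z) / 2) ^ 2 * τx)) z := by
  have hc := speedOfEta_pos hK hγ hη
  set c := speedOfEta K₁ γ ((s z - r z) / 2) with hc_def
  have dη : HasFDerivAt (fun z => (s z - r z) / 2)
      (linForm ((sx - rx) / 2) (-c * ((sx + rx) / 2))) z :=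
    ((ds.sub dr).mul_const 2⁻¹).congr_fderiv (clm_prod_ext
      (by simp only [smul_apply, sub_apply, linForm_apply, smul_eq_mul]; ring)
      (by simp only [smul_apply, sub_apply, linForm_apply, smul_eq_mul]; ring))
  have du : HasFDerivAt (fun z => (s z + r z) / 2)
      (linForm ((sx + rx) / 2) (-c * ((sx - rx) / 2))) z :=
    ((ds.add dr).mul_const 2⁻¹).congr_fderiv (clm_prod_ext
      (by simp only [smul_apply, add_apply, linForm_apply, smul_eq_mul]; ring)
      (by simp only [smul_apply, add_apply, linForm_apply, smul_eq_mul]; ring))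
  have dτ := hasFDerivAt_linForm_comp dη (hasDerivAt_tauOfEta hK hγ hη)
  rw [← hc_def, ← inv_neg, inv_mul_cancel_left₀ (neg_ne_zero.2 hc.ne')] at dτ
  refine ⟨_, _, dτ, du.congr_fderiv (congrArg (linForm _) ?_)⟩
  field_simp

theorem of_riemann (hK : 0 < K₁) (hγ : 1 < γ) {s r : ℝ × ℝ → ℝ} (hs : ContDiff ℝ 1 s)
    (hr : ContDiff ℝ 1 r) (hpos : ∀ z : ℝ × ℝ, z.2 ∈ I → 0 < (s z - r z) / 2)
    (hd : ∀ z : ℝ × ℝ, z.2 ∈ I → ∃ sx rx,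
      HasFDerivAt s (linForm sx (-(speedOfEta K₁ γ ((s z - r z) / 2) * sx))) z ∧
      HasFDerivAt r (linForm rx (speedOfEta K₁ γ ((s z - r z) / 2) * rx)) z) :
    PSysSol K₁ γ I 1 (fun x t => tauOfEta K₁ γ ((s (x, t) - r (x, t)) / 2))
      (fun x t => (s (x, t) + r (x, t)) / 2) := by
  refine ⟨fun x t ht => tauOfEta_pos hK hγ (hpos (x, t) ht), fun z hz => ?_,
    ((hs.add hr).div_const 2).contDiffOn, fun x t ht => ?_, fun x t ht => ?_⟩
  · exact ((contDiffAt_tauOfEta (hpos z hz.2).ne').comp z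
      ((hs.sub hr).div_const 2).contDiffAt).contDiffWithinAt
  all_goals
    obtain ⟨sx, rx, ds, dr⟩ := hd (x, t) ht
    obtain ⟨τx, ux, dτ, du⟩ := hasFDerivAt_of_riemann hK hγ (hpos (x, t) ht) ds dr
  · rw [(hasDerivAt_snd_of_linForm dτ).deriv, (hasDerivAt_fst_of_linForm du).deriv, sub_self]
  · have hη := hpos (x, t) ht
    rw [(hasDerivAt_snd_of_linForm du).deriv,
      deriv_pressure hK hγ (tauOfEta_pos hK hγ hη) dτ, soundP_tauOfEta hK hγ hη, neg_mul,
      add_neg_cancel]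

end PSysSol

end Conversion

section Cutoff

variable {K₁ γ ε M R T : ℝ} {C s₀ r₀ : ℝ → ℝ}

lemma exists_primitive_eqOn_Ici {f F : ℝ → ℝ} (hf : Continuous f)
    (hF : ∀ y, ε ≤ y → HasDerivAt F (f y) y) :
    ∃ G : ℝ → ℝ, (∀ y, HasDerivAt G (f y) y) ∧ EqOn G F (Ici ε) := by
  refine ⟨fun y => F ε + ∫ x in ε..y, f x, fun y =>
    (hf.integral_hasStrictDerivAt ε y).hasDerivAt.const_add _, fun y hy => ?_⟩
  change F ε + ∫ x in ε..y, f x = F y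
  rw [intervalIntegral.integral_eq_sub_of_hasDerivAt
    (fun x hx => hF x ((uIcc_of_le (mem_Ici.1 hy) ▸ hx).1)) (hf.intervalIntegrable _ _),
    add_sub_cancel]

/-- `C` extends the sound speed `c(η)` from `[ε, ∞)` to a positive function on `ℝ` with bounded
logarithmic derivative. -/
structure IsCutoffSpeed (K₁ γ ε : ℝ) (C : ℝ → ℝ) : Prop where
  pos : ∀ y, 0 < C y
  hasDerivAt : ∀ y, HasDerivAt C ((γ + 1) / (γ - 1) / max y ε * C y) y
  eqOn : EqOn C (speedOfEta K₁ γ) (Ici ε)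

lemma exists_isCutoffSpeed (hK : 0 < K₁) (hγ : 1 < γ) (hε : 0 < ε) :
    ∃ C, IsCutoffSpeed K₁ γ ε C := by
  have hmax : ∀ y, max y ε ≠ 0 := fun y => (lt_max_of_lt_right hε).ne'
  obtain ⟨ℓ, hℓ, hℓ_eq⟩ := exists_primitive_eqOn_Ici
    (f := fun y => (γ + 1) / (γ - 1) / max y ε) (F := fun y => log (speedOfEta K₁ γ y))
    (continuous_const.div (by fun_prop) hmax) (fun y (hy : ε ≤ y) => by
      have hy₀ := hε.trans_le hy
      rw [max_eq_left hy]
      exact ((hasDerivAt_speedOfEta hy₀.ne').log (speedOfEta_pos hK hγ hy₀).ne').congr_deriv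
        (mul_div_cancel_right₀ _ (speedOfEta_pos hK hγ hy₀).ne'))
  refine ⟨fun y => exp (ℓ y), fun y => exp_pos _, fun y => (hℓ y).exp.congr_deriv (mul_comm _ _),
    fun y hy => ?_⟩
  simp only [hℓ_eq hy, exp_log (speedOfEta_pos hK hγ (hε.trans_le hy))]

namespace IsCutoffSpeed

lemma continuous (hC : IsCutoffSpeed K₁ γ ε C) : Continuous C :=
  continuous_iff_continuousAt.2 fun y => (hC.hasDerivAt y).continuousAt

lemma logDeriv_nonneg (hγ : 1 < γ) (hε : 0 < ε) (y : ℝ) : 0 ≤ (γ + 1) / (γ - 1) / max y ε :=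
  div_nonneg (div_nonneg (by linarith) (by linarith)) (hε.trans_le (le_max_right y ε)).le

lemma monotone (hγ : 1 < γ) (hε : 0 < ε) (hC : IsCutoffSpeed K₁ γ ε C) : Monotone C :=
  monotone_of_hasDerivAt_nonneg hC.hasDerivAt fun y =>
    mul_nonneg (logDeriv_nonneg hγ hε y) (hC.pos y).le

lemma exists_riemannSolution (hγ : 1 < γ) (hε : 0 < ε) (hC : IsCutoffSpeed K₁ γ ε C)
    (hs : ContDiff ℝ 1 s₀) (hr : ContDiff ℝ 1 r₀) (hs' : ∀ x, 0 ≤ deriv s₀ x)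
    (hr' : ∀ x, 0 ≤ deriv r₀ x) (hsM : ∀ x, deriv s₀ x ≤ M) (hrM : ∀ x, deriv r₀ x ≤ M)
    (hR : ∀ a b, |(s₀ a - r₀ b) / 2| ≤ R) :
    ∃ s r : ℝ × ℝ → ℝ, ContDiff ℝ 1 s ∧ ContDiff ℝ 1 r ∧
      (∀ x, s (x, 0) = s₀ x) ∧ (∀ x, r (x, 0) = r₀ x) ∧
      ∀ y, 0 ≤ y.2 → C ((s y - r y) / 2) ≤ C R ∧ ∃ sx ≤ M, ∃ rx ≤ M,
        HasFDerivAt s (linForm sx (-(C ((s y - r y) / 2) * sx))) y ∧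
        HasFDerivAt r (linForm rx (C ((s y - r y) / 2) * rx)) y := by
  have hmax : ∀ y, max y ε ≠ 0 := fun y => (lt_max_of_lt_right hε).ne'
  refine _root_.exists_riemannSolution (k := fun y => (γ + 1) / (γ - 1) / max y ε / 4)
    (B := (γ + 1) / (γ - 1) / ε / 4) (fun y => (hC.hasDerivAt y).congr_deriv (by ring))
    ((continuous_const.div (by fun_prop) hmax).div_const 4)
    (fun y => div_nonneg (logDeriv_nonneg hγ hε y) (by norm_num)) (fun y => ?_) hs hr hs' hr' hsM
    hrM (hC.pos (-R)) (fun a b => hC.monotone hγ hε (abs_le.1 (hR a b)).1)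
    fun a b => hC.monotone hγ hε (abs_le.1 (hR a b)).2
  have : 0 ≤ (γ + 1) / (γ - 1) := div_nonneg (by linarith) (by linarith)
  gcongr
  exact le_max_right y ε

/-- An antiderivative `G` of `1 / C` extends `-τ`, and `G(η)` decreases at most at rate `M`. -/
lemma le_of_decay (hK : 0 < K₁) (hγ : 1 < γ) (hε : 0 < ε)
    (hC : IsCutoffSpeed K₁ γ ε C) {η η' : ℝ → ℝ} (hη : ∀ t, 0 ≤ t → HasDerivAt η (η' t) t)
    (hη' : ∀ t, 0 ≤ t → -(M * C (η t)) ≤ η' t) (h₀ : ε ≤ η 0) (hT : 0 ≤ T)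
    (hτ : tauOfEta K₁ γ (η 0) + M * T ≤ tauOfEta K₁ γ ε) : ε ≤ η T := by
  obtain ⟨G, hG, hGeq⟩ := exists_primitive_eqOn_Ici (f := fun y => (C y)⁻¹)
    (F := fun y => -tauOfEta K₁ γ y) (hC.continuous.inv₀ fun y => (hC.pos y).ne')
    (fun y (hy : ε ≤ y) => by
      rw [hC.eqOn hy]
      exact (hasDerivAt_tauOfEta hK hγ (hε.trans_le hy)).fun_neg.congr_deriv (neg_neg _))
  have hGmono : StrictMono G := strictMono_of_hasDerivAt_pos hG fun y => inv_pos.2 (hC.pos y)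
  have hdecay : ∀ t, 0 ≤ t →
      HasDerivAt (fun t => G (η t) + M * t) ((C (η t))⁻¹ * η' t + M * 1) t := fun t ht =>
    ((hG (η t)).comp t (hη t ht)).add ((hasDerivAt_id t).const_mul M)
  have hmono : MonotoneOn (fun t => G (η t) + M * t) (Ici 0) :=
    monotoneOn_of_hasDerivWithinAt_nonneg (convex_Ici 0)
      (fun t ht => (hdecay t ht).continuousAt.continuousWithinAt)
      (fun t ht => (hdecay t (interior_subset ht)).hasDerivWithinAt) fun t ht => by
        have hc := hC.pos (η t)
        have hle := hη' t (interior_subset ht)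
        field_simp
        linarith
  refine hGmono.le_iff_le.1 ?_
  calc G ε = -tauOfEta K₁ γ ε := hGeq self_mem_Ici
    _ ≤ -tauOfEta K₁ γ (η 0) - M * T := by linarith
    _ = G (η 0) + M * 0 - M * T := by rw [hGeq h₀, mul_zero, add_zero]
    _ ≤ G (η T) := sub_le_iff_le_add.2 (hmono self_mem_Ici hT hT)

lemma le_half_riemann_sub (hK : 0 < K₁) (hγ : 1 < γ) (hε : 0 < ε) (hC : IsCutoffSpeed K₁ γ ε C)
    {s r : ℝ × ℝ → ℝ} {x : ℝ} (hd : ∀ t, 0 ≤ t → ∃ sx ≤ M, ∃ rx ≤ M,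
      HasFDerivAt s (linForm sx (-(C ((s (x, t) - r (x, t)) / 2) * sx))) (x, t) ∧
      HasFDerivAt r (linForm rx (C ((s (x, t) - r (x, t)) / 2) * rx)) (x, t))
    (h₀ : ε ≤ (s (x, 0) - r (x, 0)) / 2) (hT : 0 ≤ T)
    (hτ : tauOfEta K₁ γ ((s (x, 0) - r (x, 0)) / 2) + M * T ≤ tauOfEta K₁ γ ε) :
    ε ≤ (s (x, T) - r (x, T)) / 2 := by
  choose! sx hsx rx hrx ds dr using hd
  refine hC.le_of_decay hK hγ hε (M := M) (η := fun t => (s (x, t) - r (x, t)) / 2)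
    (fun t ht => ((hasDerivAt_snd_of_linForm (ds t ht)).fun_sub
      (hasDerivAt_snd_of_linForm (dr t ht))).div_const 2) (fun t ht => ?_) h₀ hT hτ
  have hle := mul_le_mul_of_nonneg_left (add_le_add (hsx t ht) (hrx t ht))
    (hC.pos ((s (x, t) - r (x, t)) / 2)).le
  linarith

end IsCutoffSpeed

end Cutoff

section StripExistence

variable {K₁ γ M₁ M₂ T : ℝ} {τ₀ u₀ : ℝ → ℝ}

namespace AssumptionA

lemma pos (h : AssumptionA M₁ M₂ τ₀ u₀) (x : ℝ) : 0 < τ₀ x :=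
  h.2.2.2.1.trans_le (h.2.2.2.2.2 x)

lemma tau_le (h : AssumptionA M₁ M₂ τ₀ u₀) (x : ℝ) : τ₀ x ≤ M₁ := by
  linarith [h.2.2.2.2.1 x, le_abs_self (τ₀ x), abs_nonneg (deriv τ₀ x), abs_nonneg (u₀ x),
    abs_nonneg (deriv u₀ x)]

lemma abs_deriv_tau_le (h : AssumptionA M₁ M₂ τ₀ u₀) (x : ℝ) : |deriv τ₀ x| ≤ M₁ := by
  linarith [h.2.2.2.2.1 x, abs_nonneg (τ₀ x), abs_nonneg (u₀ x), abs_nonneg (deriv u₀ x)]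

lemma deriv_u_le (h : AssumptionA M₁ M₂ τ₀ u₀) (x : ℝ) : deriv u₀ x ≤ M₁ := by
  linarith [h.2.2.2.2.1 x, abs_nonneg (τ₀ x), abs_nonneg (deriv τ₀ x), abs_nonneg (u₀ x),
    le_abs_self (deriv u₀ x)]

lemma abs_u_le (h : AssumptionA M₁ M₂ τ₀ u₀) (x : ℝ) : |u₀ x| ≤ M₁ := by
  linarith [h.2.2.2.2.1 x, abs_nonneg (τ₀ x), abs_nonneg (deriv τ₀ x), abs_nonneg (deriv u₀ x)]

lemma contDiff_etaP (h : AssumptionA M₁ M₂ τ₀ u₀) : ContDiff ℝ 1 fun x => etaP K₁ γ (τ₀ x) :=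
  contDiff_const.mul (h.1.rpow_const_of_ne fun x => (h.pos x).ne')

lemma abs_deriv_etaP_le (hK : 0 < K₁) (hγ : 1 < γ) (h : AssumptionA M₁ M₂ τ₀ u₀) (x : ℝ) :
    |deriv (fun x => etaP K₁ γ (τ₀ x)) x| ≤ soundP K₁ γ M₂ * M₁ := by
  have hd : HasDerivAt (fun x => etaP K₁ γ (τ₀ x)) (-soundP K₁ γ (τ₀ x) * deriv τ₀ x) x :=
    (hasDerivAt_etaP hγ.ne' (h.pos x).ne').comp x (h.1.differentiable one_ne_zero x).hasDerivAt
  have hc := soundP_pos hK hγ (h.pos x)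
  rw [hd.deriv, abs_mul, abs_neg, abs_of_pos hc]
  have hanti := antitoneOn_soundP (K₁ := K₁) hγ h.2.2.2.1 (h.pos x) (h.2.2.2.2.2 x)
  exact mul_le_mul hanti (h.abs_deriv_tau_le x) (abs_nonneg _) (hc.le.trans hanti)

lemma deriv_riemann_le (hK : 0 < K₁) (hγ : 1 < γ) (h : AssumptionA M₁ M₂ τ₀ u₀) (x : ℝ) :
    deriv (fun x => u₀ x + etaP K₁ γ (τ₀ x)) x ≤ M₁ + soundP K₁ γ M₂ * M₁ ∧
    deriv (fun x => u₀ x - etaP K₁ γ (τ₀ x)) x ≤ M₁ + soundP K₁ γ M₂ * M₁ := by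
  have hu := h.2.1.differentiable one_ne_zero x
  have hη := (h.contDiff_etaP (K₁ := K₁) (γ := γ)).differentiable one_ne_zero x
  have hηx := abs_le.1 (h.abs_deriv_etaP_le hK hγ x)
  have hux := h.deriv_u_le x
  rw [deriv_fun_add hu hη, deriv_fun_sub hu hη]
  constructor <;> linarith

lemma abs_half_riemann_sub_le (hK : 0 < K₁) (hγ : 1 < γ) (h : AssumptionA M₁ M₂ τ₀ u₀)
    (a b : ℝ) :
    |(u₀ a + etaP K₁ γ (τ₀ a) - (u₀ b - etaP K₁ γ (τ₀ b))) / 2| ≤ M₁ + etaP K₁ γ M₂ := by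
  have hη : ∀ x, etaP K₁ γ (τ₀ x) ≤ etaP K₁ γ M₂ := fun x =>
    antitoneOn_etaP hK hγ h.2.2.2.1 (h.pos x) (h.2.2.2.2.2 x)
  have hηpos : ∀ x, 0 < etaP K₁ γ (τ₀ x) := fun x => etaP_pos hK hγ (h.pos x)
  have hua := abs_le.1 (h.abs_u_le a)
  have hub := abs_le.1 (h.abs_u_le b)
  rw [abs_le]
  constructor <;> linarith [hη a, hη b, hηpos a, hηpos b]

/-- As `τ_t = u_x ≤ M`, up to time `T` one has `τ ≤ M₁ + M T`, so a speed law that is cut off below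
the corresponding `η` is never seen. -/
theorem exists_pSysSol_Ico (hK : 0 < K₁) (hγ : 1 < γ) (h : AssumptionA M₁ M₂ τ₀ u₀)
    (hs : ∀ x, 0 ≤ deriv (fun x => u₀ x + etaP K₁ γ (τ₀ x)) x)
    (hr : ∀ x, 0 ≤ deriv (fun x => u₀ x - etaP K₁ γ (τ₀ x)) x) (hT : 0 ≤ T) :
    ∃ τ u : ℝ → ℝ → ℝ, ∃ L, PSysSol K₁ γ (Ico 0 T) 1 τ u ∧ (∀ x, τ x 0 = τ₀ x) ∧
      (∀ x, u x 0 = u₀ x) ∧ ∀ x, ∀ t ∈ Ico 0 T, soundP K₁ γ (τ x t) ≤ L := by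
  set M := M₁ + soundP K₁ γ M₂ * M₁
  have hM : 0 ≤ M := add_nonneg h.2.2.1.le (mul_pos (soundP_pos hK hγ h.2.2.2.1) h.2.2.1).le
  have hMT : 0 < M₁ + M * T := add_pos_of_pos_of_nonneg h.2.2.1 (mul_nonneg hM hT)
  set ε := etaP K₁ γ (M₁ + M * T)
  have hε : 0 < ε := etaP_pos hK hγ hMT
  obtain ⟨C, hC⟩ := exists_isCutoffSpeed hK hγ hε
  obtain ⟨s, r, hsC, hrC, hs₀, hr₀, hd⟩ := hC.exists_riemannSolution hγ hε
    (h.2.1.add h.contDiff_etaP) (h.2.1.sub h.contDiff_etaP) hs hr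
    (fun x => (h.deriv_riemann_le hK hγ x).1) (fun x => (h.deriv_riemann_le hK hγ x).2)
    (h.abs_half_riemann_sub_le hK hγ)
  have hη₀ : ∀ x, (s (x, 0) - r (x, 0)) / 2 = etaP K₁ γ (τ₀ x) := fun x => by
    rw [hs₀, hr₀]
    ring
  have hη : ∀ z : ℝ × ℝ, z.2 ∈ Ico 0 T → ε ≤ (s z - r z) / 2 := fun z hz => by
    refine hC.le_half_riemann_sub hK hγ hε (fun t ht => (hd (z.1, t) ht).2) ?_ hz.1 ?_
    · rw [hη₀]
      exact antitoneOn_etaP hK hγ (h.pos z.1) hMT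
        ((h.tau_le z.1).trans (le_add_of_nonneg_right (mul_nonneg hM hT)))
    · rw [hη₀, tauOfEta_etaP hK hγ (h.pos z.1), tauOfEta_etaP hK hγ hMT]
      exact add_le_add (h.tau_le z.1) (mul_le_mul_of_nonneg_left hz.2.le hM)
  refine ⟨_, _, C (M₁ + etaP K₁ γ M₂), PSysSol.of_riemann hK hγ hsC hrC
    (fun z hz => hε.trans_le (hη z hz)) (fun z hz => ?_), fun x => ?_, fun x => ?_,
    fun x t ht => ?_⟩
  · obtain ⟨-, sx, -, rx, -, hsr⟩ := hd z hz.1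
    exact ⟨sx, rx, hC.eqOn (hη z hz) ▸ hsr⟩
  · rw [hη₀, tauOfEta_etaP hK hγ (h.pos x)]
  · rw [hs₀, hr₀]
    ring
  · have hηxt := hη (x, t) ht
    rw [soundP_tauOfEta hK hγ (hε.trans_le hηxt), ← hC.eqOn hηxt]
    exact (hd (x, t) ht.1).1

end AssumptionA

end StripExistence

section Globalization

variable {K₁ γ : ℝ} {I : Set ℝ}

namespace PSysSol

lemma mono {J : Set ℝ} {k : ℕ} {τ u : ℝ → ℝ → ℝ} (hIJ : I ⊆ J) (h : PSysSol K₁ γ J k τ u) :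
    PSysSol K₁ γ I k τ u :=
  ⟨fun x t ht => h.1 x t (hIJ ht), h.2.1.mono (prod_mono_right hIJ),
    h.2.2.1.mono (prod_mono_right hIJ), fun x t ht => h.2.2.2.1 x t (hIJ ht),
    fun x t ht => h.2.2.2.2 x t (hIJ ht)⟩

lemma contDiffWithinAt_of_eventuallyEq {J : Set ℝ} {k : ℕ} {f g : ℝ → ℝ → ℝ} {z : ℝ × ℝ}
    (hf : ContDiffOn ℝ k (fun p : ℝ × ℝ => f p.1 p.2) (univ ×ˢ J)) (hz : z.2 ∈ I)
    (hJ : J ∈ 𝓝[I] z.2) (hgf : ∀ᶠ t in 𝓝 z.2, ∀ x, g x t = f x t) :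
    ContDiffWithinAt ℝ k (fun p : ℝ × ℝ => g p.1 p.2) (univ ×ˢ I) z := by
  have hJ' : univ ×ˢ J ∈ 𝓝[univ ×ˢ I] z := by
    rw [nhdsWithin_prod_eq]
    exact prod_mem_prod univ_mem hJ
  refine ((hf z ⟨trivial, mem_of_mem_nhdsWithin hz hJ⟩).mono_of_mem_nhdsWithin
    hJ').congr_of_eventuallyEq ?_ (hgf.self_of_nhds z.1)
  filter_upwards [mem_nhdsWithin_of_mem_nhds ((continuous_snd.tendsto z).eventually hgf)] with p hp
  exact hp p.1

lemma of_locally_eq {k : ℕ} {τ u : ℝ → ℝ → ℝ}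
    (h : ∀ t ∈ I, ∃ τ' u' J, PSysSol K₁ γ J k τ' u' ∧ J ∈ 𝓝[I] t ∧
      ∀ᶠ t' in 𝓝 t, ∀ x, τ x t' = τ' x t' ∧ u x t' = u' x t') :
    PSysSol K₁ γ I k τ u := by
  choose! τ' u' J hsol hJ heq using h
  have hτ : ∀ t ∈ I, ∀ᶠ t' in 𝓝 t, ∀ x, τ x t' = τ' t x t' := fun t ht =>
    (heq t ht).mono fun t' h x => (h x).1
  have hu : ∀ t ∈ I, ∀ᶠ t' in 𝓝 t, ∀ x, u x t' = u' t x t' := fun t ht =>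
    (heq t ht).mono fun t' h x => (h x).2
  have hmem : ∀ t ∈ I, t ∈ J t := fun t ht => mem_of_mem_nhdsWithin ht (hJ t ht)
  have hτ_slice : ∀ t ∈ I, ∀ x, τ x t = τ' t x t := fun t ht => (hτ t ht).self_of_nhds
  have hu_slice : ∀ t ∈ I, ∀ x, u x t = u' t x t := fun t ht => (hu t ht).self_of_nhds
  refine ⟨fun x t ht => ?_, fun z hz => ?_, fun z hz => ?_, fun x t ht => ?_, fun x t ht => ?_⟩
  · rw [hτ_slice t ht]
    exact (hsol t ht).1 x t (hmem t ht)
  · exact contDiffWithinAt_of_eventuallyEq (hsol _ hz.2).2.1 hz.2 (hJ _ hz.2) (hτ _ hz.2)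
  · exact contDiffWithinAt_of_eventuallyEq (hsol _ hz.2).2.2.1 hz.2 (hJ _ hz.2) (hu _ hz.2)
  · have hτt : (fun t => τ x t) =ᶠ[𝓝 t] fun s => τ' t x s := (hτ t ht).mono fun _ h => h x
    simp only [hτt.deriv_eq, hu_slice t ht]
    exact (hsol t ht).2.2.2.1 x t (hmem t ht)
  · have hut : (fun t => u x t) =ᶠ[𝓝 t] fun s => u' t x s := (hu t ht).mono fun _ h => h x
    simp only [hut.deriv_eq, hτ_slice t ht]
    exact (hsol t ht).2.2.2.2 x t (hmem t ht)

theorem glue_Ici {k : ℕ} {τs us : ℕ → ℝ → ℝ → ℝ}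
    (h : ∀ n : ℕ, PSysSol K₁ γ (Ico 0 (n + 1)) k (τs n) (us n))
    (hagree : ∀ m n : ℕ, ∀ t ∈ Ico (0 : ℝ) (min (m + 1) (n + 1)), ∀ x,
      τs m x t = τs n x t ∧ us m x t = us n x t) :
    PSysSol K₁ γ (Ici 0) k (fun x t => τs ⌊t⌋₊ x t) (fun x t => us ⌊t⌋₊ x t) := by
  refine of_locally_eq fun t ht => ⟨_, _, _, h ⌊t⌋₊, ?_, ?_⟩
  · filter_upwards [self_mem_nhdsWithin,
      mem_nhdsWithin_of_mem_nhds (Iio_mem_nhds (Nat.lt_floor_add_one t))] with t' h₀ h₁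
    exact ⟨h₀, h₁⟩
  rcases (mem_Ici.1 ht).eq_or_lt with rfl | ht₀
  · filter_upwards [Iio_mem_nhds one_pos] with t' ht' x
    rw [Nat.floor_eq_zero.2 ht', Nat.floor_zero]
    exact ⟨rfl, rfl⟩
  · filter_upwards [Ioo_mem_nhds ht₀ (Nat.lt_floor_add_one t)] with t' ht' x
    exact hagree _ _ t' ⟨ht'.1.le, lt_min (Nat.lt_floor_add_one t') ht'.2⟩ x

end PSysSol

theorem AssumptionA.exists_pSysSol_Ico_forall_eq {M₁ M₂ T : ℝ} {τ₀ u₀ : ℝ → ℝ} (hK : 0 < K₁)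
    (hγ : 1 < γ) (h : AssumptionA M₁ M₂ τ₀ u₀)
    (hrar : ∀ x, 0 ≤ deriv (fun x' => u₀ x' + etaP K₁ γ (τ₀ x')) x ∧
      0 ≤ deriv (fun x' => u₀ x' - etaP K₁ γ (τ₀ x')) x) (hT : 0 ≤ T) :
    ∃ τ u : ℝ → ℝ → ℝ, PSysSol K₁ γ (Ico 0 T) 1 τ u ∧ (∀ x, τ x 0 = τ₀ x) ∧
      (∀ x, u x 0 = u₀ x) ∧ ∀ (T' : ℝ) (τ' u' : ℝ → ℝ → ℝ), PSysSol K₁ γ (Ico 0 T') 1 τ' u' →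
        (∀ x, τ' x 0 = τ₀ x) → (∀ x, u' x 0 = u₀ x) →
        ∀ t ∈ Ico 0 (min T T'), ∀ x, τ x t = τ' x t ∧ u x t = u' x t := by
  obtain ⟨τ, u, L, hsol, hτ, hu, hL⟩ :=
    h.exists_pSysSol_Ico hK hγ (fun x => (hrar x).1) (fun x => (hrar x).2) hT
  refine ⟨τ, u, hsol, hτ, hu, fun T' τ' u' h' hτ' hu' t ht x => ?_⟩
  have hI : Ico 0 (min T T') ⊆ Ico 0 T := Ico_subset_Ico_right (min_le_left _ _)
  exact (hsol.mono hI).eq_of_soundP_le hK hγ (h'.mono (Ico_subset_Ico_right (min_le_right _ _)))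
    (fun x t ht => hL x t (hI ht)) (fun x => (hτ x).trans (hτ' x).symm)
    (fun x => (hu x).trans (hu' x).symm) x ht

end Globalization

/-- Theorem 2.2 (sufficiency): for `γ > 1` and initial data satisfying Assumption A, if
`s_x(x,0) ≥ 0` and `r_x(x,0) ≥ 0` for all `x` (nowhere compressive data), then the Cauchy
problem for the p-system admits a unique global-in-time `C¹` solution on `ℝ × [0,∞)`. -/
theorem psystem_global_existence_of_rarefaction
    (K₁ γ M₁ M₂ : ℝ) (hK₁ : 0 < K₁) (hγ : 1 < γ)
    (τ₀ u₀ : ℝ → ℝ) (hA : AssumptionA M₁ M₂ τ₀ u₀)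
    (hrar : ∀ x, 0 ≤ deriv (fun x' => u₀ x' + etaP K₁ γ (τ₀ x')) x
              ∧ 0 ≤ deriv (fun x' => u₀ x' - etaP K₁ γ (τ₀ x')) x) :
    (∃ τ u : ℝ → ℝ → ℝ,
        PSysSol K₁ γ (Set.Ici 0) 1 τ u ∧ (∀ x, τ x 0 = τ₀ x) ∧ (∀ x, u x 0 = u₀ x)) ∧
    (∀ τ u τ' u' : ℝ → ℝ → ℝ,
        PSysSol K₁ γ (Set.Ici 0) 1 τ u → (∀ x, τ x 0 = τ₀ x) → (∀ x, u x 0 = u₀ x) →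
        PSysSol K₁ γ (Set.Ici 0) 1 τ' u' → (∀ x, τ' x 0 = τ₀ x) → (∀ x, u' x 0 = u₀ x) →
        ∀ x t : ℝ, 0 ≤ t → τ x t = τ' x t ∧ u x t = u' x t) := by
  choose τs us hsol hτs hus hagree using fun n : ℕ =>
    hA.exists_pSysSol_Ico_forall_eq hK₁ hγ hrar n.cast_add_one_pos.le
  refine ⟨⟨_, _, PSysSol.glue_Ici hsol fun m n => hagree m _ _ _ (hsol n) (hτs n) (hus n),
    fun x => hτs _ x, fun x => hus _ x⟩, fun τ u τ' u' h hτ hu h' hτ' hu' x t ht => ?_⟩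
  have htn : t ∈ Ico (0 : ℝ) (min (⌊t⌋₊ + 1) (⌊t⌋₊ + 1)) :=
    ⟨ht, lt_min (Nat.lt_floor_add_one t) (Nat.lt_floor_add_one t)⟩
  obtain ⟨hτ_eq, hu_eq⟩ := hagree _ _ τ u (h.mono Ico_subset_Ici_self) hτ hu t htn x
  obtain ⟨hτ'_eq, hu'_eq⟩ := hagree _ _ τ' u' (h'.mono Ico_subset_Ici_self) hτ' hu' t htn x
  exact ⟨hτ_eq.symm.trans hτ'_eq, hu_eq.symm.trans hu'_eq⟩
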